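/- arXiv:1005.2553 — 3 statements merged into one kernel-verified Lean document; each statement's English description precedes it below -/
import Mathlib

section
/- Let n ≥ 1, let v = (1, 2, …, n), let m ≥ 1, and let r = (r_1, …, r_n) ∈ ℕ^n satisfy r·v = n. For k ≥ 1 let C(n, k, r) denote the number of noncrossing set partitions of [n] of type r with exactly k connected components. Then, as rational numbers, C(n, m, r) = Σ_{k=1}^{m} (−1)^{k} · C(m, k) · A_r(−k), where A_r(−k) denotes the evaluation of the polynomial A_r(x) at x = −k and C(m, k) is a binomial coefficient. -/
/-- A set partition of `[n] = {1, …, n}`, encoded as a `Finpartition` of `Finset.Icc 1 n`. -/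
abbrev SetPartitionOn (n : ℕ) := Finpartition (Finset.Icc 1 n)

/-- `π` has type `r = (r_1, …, r_n)` if for each `i` the number of blocks of size `i` is `r_i`. -/
def HasType {n : ℕ} (π : SetPartitionOn n) (r : Fin n → ℕ) : Prop :=
  ∀ i : Fin n, (π.parts.filter (fun B => B.card = i.1 + 1)).card = r i

/-- `π` is noncrossing: there are no `a < b < c < d` with `a, c` in one block and
`b, d` in a different block. -/
def Noncrossing {n : ℕ} (π : SetPartitionOn n) : Prop :=
  ¬ ∃ a b c d : ℕ, a < b ∧ b < c ∧ c < d ∧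
      ∃ B ∈ π.parts, ∃ B' ∈ π.parts, B ≠ B' ∧ a ∈ B ∧ c ∈ B ∧ b ∈ B' ∧ d ∈ B'

/-- `(i, j)` is an arc of `π`: `i < j` lie in a common block with no element of that
block strictly between them. -/
def IsArc {n : ℕ} (π : SetPartitionOn n) (i j : ℕ) : Prop :=
  i < j ∧ ∃ B ∈ π.parts, i ∈ B ∧ j ∈ B ∧ ∀ k ∈ B, ¬ (i < k ∧ k < j)

/-- `π` is nonnesting: there are no arcs `(a, d)` and `(b, c)` with `a < b < c < d`. -/
def Nonnesting {n : ℕ} (π : SetPartitionOn n) : Prop :=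
  ¬ ∃ a b c d : ℕ, a < b ∧ b < c ∧ c < d ∧ IsArc π a d ∧ IsArc π b c

/-- `i ∈ {1, …, n-1}` is a cut of `π` if no block contains both an element `≤ i` and an
element `> i`. -/
def IsCut {n : ℕ} (π : SetPartitionOn n) (i : ℕ) : Prop :=
  1 ≤ i ∧ i ≤ n - 1 ∧ ∀ B ∈ π.parts, (∀ x ∈ B, x ≤ i) ∨ (∀ x ∈ B, i < x)

/-- `π` is connected if it has no cuts. -/
def Connected {n : ℕ} (π : SetPartitionOn n) : Prop := ∀ i, ¬ IsCut π i

/-- The number of cuts of `π`; `π` has exactly `m` connected components iff this is `m - 1`. -/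
noncomputable def cutCount {n : ℕ} (π : SetPartitionOn n) : ℕ := Set.ncard {i : ℕ | IsCut π i}

open Polynomial

/-- Zeng's polynomial `A_r(x) ∈ ℚ[x]` for `v = (1, 2, …, n)`:
`A_r(x) = 1` if `r = 0`, and otherwise
`A_r(x) = (1/r!) · x · (x + r·v - 1)(x + r·v - 2) ⋯ (x + r·v - |r| + 1)`. -/
noncomputable def Apoly {n : ℕ} (r : Fin n → ℕ) : Polynomial ℚ :=
  if r = 0 then 1 else
    C (((∏ i, (r i).factorial : ℕ) : ℚ))⁻¹ *
      (X * ∏ j ∈ Finset.range ((∑ i, r i) - 1),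
        (X + C (((∑ i, (i.1 + 1) * r i : ℕ) : ℚ) - 1 - (j : ℚ))))


/-- closed expression for the coefficient -/
noncomputable def Gval {K : ℕ} (h m : ℕ) (r : Fin K → ℕ) : ℚ :=
  ∑ k ∈ Finset.range (m+1), (-1 : ℚ) ^ k * (m.choose k : ℚ) * (Apoly r).eval ((h : ℚ) - k)

/-- lower one entry -/
def dec {K : ℕ} (r : Fin K → ℕ) (i : Fin K) : Fin K → ℕ := Function.update r i (r i - 1)

theorem dec_prod {K : ℕ} (r : Fin K → ℕ) (i : Fin K) (hi : 0 < r i) :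
    ∏ j, (r j).factorial = r i * ∏ j, (dec r i j).factorial := by
  rw [← Finset.mul_prod_erase _ _ (Finset.mem_univ i),
    ← Finset.mul_prod_erase _ (fun j => (dec r i j).factorial) (Finset.mem_univ i)]
  have : ∏ x ∈ Finset.univ.erase i, (dec r i x).factorial
      = ∏ x ∈ Finset.univ.erase i, (r x).factorial := by
    apply Finset.prod_congr rfl
    intro x hx
    simp [dec, Finset.ne_of_mem_erase hx]
  rw [this, ← mul_assoc]
  congr 1
  simp only [dec, Function.update_self]
  exact (Nat.mul_factorial_pred hi.ne').symm

theorem dec_sum {K : ℕ} (r : Fin K → ℕ) (i : Fin K) (hi : 0 < r i) (c : Fin K → ℕ) :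
    ∑ j, c j * r j = ∑ j, c j * dec r i j + c i := by
  rw [← Finset.add_sum_erase _ _ (Finset.mem_univ i),
    ← Finset.add_sum_erase _ (fun j => c j * dec r i j) (Finset.mem_univ i)]
  have : ∑ x ∈ Finset.univ.erase i, c x * dec r i x
      = ∑ x ∈ Finset.univ.erase i, c x * r x := by
    apply Finset.sum_congr rfl
    intro x hx
    simp [dec, Finset.ne_of_mem_erase hx]
  rw [this]
  simp only [dec, Function.update_self]
  obtain ⟨t, ht⟩ := Nat.exists_eq_succ_of_ne_zero hi.ne'
  rw [ht]; simp; ring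

theorem Apoly_zero {K : ℕ} (x : ℚ) : (Apoly (0 : Fin K → ℕ)).eval x = 1 := by simp [Apoly]

theorem Apoly_eval {K : ℕ} (r : Fin K → ℕ) (hr : r ≠ 0) (x : ℚ) : (Apoly r).eval x =
    (((∏ i, (r i).factorial : ℕ) : ℚ))⁻¹ *
      (x * ∏ j ∈ Finset.range ((∑ i, r i) - 1),
        (x + (((∑ i, (i.1 + 1) * r i : ℕ) : ℚ) - 1 - (j : ℚ)))) := by
  simp only [Apoly, if_neg hr, eval_mul, eval_C, eval_X, eval_prod, eval_add]

theorem Apoly_rec {K : ℕ} (r : Fin K → ℕ) (x : ℚ) :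
    (Apoly r).eval x = (Apoly r).eval (x - 1) +
      ∑ i ∈ Finset.univ.filter (fun i => 0 < r i), (Apoly (dec r i)).eval (x + (i.1 : ℚ)) := by
  by_cases hr : r = 0
  · subst hr; simp [Apoly_zero]
  obtain ⟨l, hl⟩ : ∃ l, ∑ i, r i = l + 1 := by
    apply Nat.exists_eq_succ_of_ne_zero
    intro h
    apply hr
    funext i
    simpa using (Finset.sum_eq_zero_iff.1 h) i (Finset.mem_univ i)
  set N := ∑ i, (i.1 + 1) * r i with hN
  set R : ℚ := ((∏ i, (r i).factorial : ℕ) : ℚ) with hR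
  have hR0 : R ≠ 0 := by
    rw [hR]; exact_mod_cast Finset.prod_ne_zero_iff.2 (fun i _ => Nat.factorial_ne_zero _)
  have key : ∀ i, 0 < r i → ∑ j, dec r i j = l ∧ (∑ j : Fin K, (j.1+1) * dec r i j) + (i.1+1) = N
      ∧ R = r i * ((∏ j, (dec r i j).factorial : ℕ) : ℚ) := by
    intro i hi
    refine ⟨?_, (dec_sum r i hi _).symm, ?_⟩
    · have := dec_sum r i hi (fun _ => 1)
      simp at this; omega
    · rw [hR, dec_prod r i hi]; push_cast; rfl
  rw [Apoly_eval r hr, Apoly_eval r hr, hl]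
  simp only [Nat.add_sub_cancel]
  rcases Nat.eq_zero_or_pos l with rfl | hlpos
  · have hz : ∀ i, 0 < r i → dec r i = 0 := by
      intro i hi
      funext j
      simpa using (Finset.sum_eq_zero_iff.1 (key i hi).1) j (Finset.mem_univ j)
    rw [Finset.sum_congr rfl (g := fun i => R⁻¹ * (r i : ℚ))]
    · rw [← Finset.mul_sum]
      have : ∑ i ∈ Finset.univ.filter (fun i => 0 < r i), (r i : ℚ) = 1 := by
        rw [Finset.sum_filter_of_ne]
        · exact_mod_cast hl
        · intro i _ h; exact Nat.pos_of_ne_zero (by exact_mod_cast h)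
      rw [this]; simp only [Finset.range_zero, Finset.prod_empty]; ring
    · intro i hi
      simp only [Finset.mem_filter, Finset.mem_univ, true_and] at hi
      have h3 := (key i hi).2.2
      rw [hz i hi, Apoly_zero]
      rw [hz i hi] at h3
      simp at h3
      rw [h3, inv_mul_cancel₀]
      exact_mod_cast hi.ne'
  · obtain ⟨l, rfl⟩ : ∃ t, l = t + 1 := ⟨l - 1, by omega⟩
    set Q : ℚ := ∏ j ∈ Finset.range l, (x + ((N:ℚ) - 2 - j)) with hQ
    have hterm : ∀ i ∈ Finset.univ.filter (fun i => 0 < r i),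
        (Apoly (dec r i)).eval (x + (i.1 : ℚ)) = R⁻¹ * Q * ((r i : ℚ) * (x + i.1)) := by
      intro i hi
      simp only [Finset.mem_filter, Finset.mem_univ, true_and] at hi
      obtain ⟨h1, h2, h3⟩ := key i hi
      have hne : dec r i ≠ 0 := by
        intro h; rw [h] at h1; simp at h1
      rw [Apoly_eval _ hne, h1, h3]
      have hp : ∏ j ∈ Finset.range (l + 1 - 1), (x + (i.1:ℚ) +
          (((∑ j : Fin K, (j.1 + 1) * dec r i j : ℕ) : ℚ) - 1 - (j : ℚ))) = Q := by
        rw [hQ]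
        apply Finset.prod_congr rfl
        intro j _
        rw [← h2]; push_cast; ring
      rw [hp]
      have : (r i : ℚ) ≠ 0 := by exact_mod_cast hi.ne'
      rw [mul_inv]
      field_simp
    rw [Finset.sum_congr rfl hterm, ← Finset.mul_sum]
    have hs : ∑ i ∈ Finset.univ.filter (fun i => 0 < r i), ((r i : ℚ) * (x + i.1))
        = (l + 2) * (x - 1) + N := by
      rw [Finset.sum_filter_of_ne]
      · have e1 : (∑ i, (r i : ℚ)) = l + 2 := by
          have : ((∑ i, r i : ℕ) : ℚ) = ((l + 1 + 1 : ℕ) : ℚ) := by rw [hl]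
          push_cast at this; rw [this]; ring
        rw [hN, ← e1]
        push_cast
        rw [Finset.sum_mul, ← Finset.sum_add_distrib]
        exact Finset.sum_congr rfl (fun i _ => by ring)
      · intro i _ h
        apply Nat.pos_of_ne_zero
        intro h0; simp [h0] at h
    rw [hs]
    have p1 : ∏ j ∈ Finset.range (l+1), (x + ((N:ℚ) - 1 - j)) = (x + (N - 1)) * Q := by
      rw [Finset.prod_range_succ', hQ, mul_comm]
      congr 1
      · simp
      · apply Finset.prod_congr rfl; intro j _; push_cast; ring
    have p2 : ∏ j ∈ Finset.range (l+1), (x - 1 + ((N:ℚ) - 1 - j)) = (x + (N - 2 - l)) * Q := by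
      rw [Finset.prod_range_succ, hQ, mul_comm]
      congr 1
      · ring
      · apply Finset.prod_congr rfl; intro j _; ring
    rw [p1, p2]
    ring

theorem Gval_rec {K : ℕ} (h m : ℕ) (r : Fin K → ℕ) :
    Gval (h+1) m r = Gval h m r +
      ∑ i ∈ Finset.univ.filter (fun i => 0 < r i), Gval (h+1+i.1) m (dec r i) := by
  simp only [Gval]
  rw [Finset.sum_comm, ← Finset.sum_add_distrib]
  apply Finset.sum_congr rfl
  intro k _
  rw [← Finset.mul_sum, ← mul_add, Apoly_rec r]
  congr 2
  · congr 1; push_cast; ring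
  · apply Finset.sum_congr rfl; intro i _; congr 1; push_cast; ring

theorem Gval_rec0 {K : ℕ} (m : ℕ) (r : Fin K → ℕ) :
    Gval 0 (m+1) r = 
      ∑ i ∈ Finset.univ.filter (fun i => 0 < r i), Gval i.1 m (dec r i) := by
  simp only [Gval]
  rw [Finset.sum_comm]
  have : ∀ k ∈ Finset.range (m+1), ∑ i ∈ Finset.univ.filter (fun i => 0 < r i),
      (-1 : ℚ) ^ k * (m.choose k : ℚ) * (Apoly (dec r i)).eval ((i.1 : ℚ) - k)
      = (-1 : ℚ) ^ k * (m.choose k : ℚ) * (Apoly r).eval (-(k:ℚ))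
        + (-1 : ℚ) ^ (k+1) * (m.choose k : ℚ) * (Apoly r).eval (-((k+1 : ℕ):ℚ)) := by
    intro k _
    have h := Apoly_rec r (-(k:ℚ))
    rw [← Finset.mul_sum]
    have e : ∑ i ∈ Finset.univ.filter (fun i => 0 < r i), (Apoly (dec r i)).eval ((i.1 : ℚ) - k)
       = ∑ i ∈ Finset.univ.filter (fun i => 0 < r i), (Apoly (dec r i)).eval (-(k:ℚ) + (i.1 : ℚ)) :=
      Finset.sum_congr rfl (fun i _ => by congr 1; ring)
    have e2 : -(k:ℚ) - 1 = -((k+1 : ℕ):ℚ) := by push_cast; ring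
    rw [e, pow_succ, ← e2, h]; ring
  rw [Finset.sum_congr rfl this, Finset.sum_add_distrib]
  rw [Finset.sum_range_succ']
  simp only [Nat.choose_succ_succ]
  have h3 : ∑ k ∈ Finset.range (m+1), (-1 : ℚ) ^ (k+1) * (m.choose (k+1) : ℚ) * (Apoly r).eval (-((k+1 : ℕ):ℚ)) + (Apoly r).eval 0
     = ∑ k ∈ Finset.range (m+1), (-1 : ℚ) ^ k * (m.choose k : ℚ) * (Apoly r).eval (-(k:ℚ)) := by
    rw [Finset.sum_range_succ, Nat.choose_succ_self, Finset.sum_range_succ' _ m]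
    simp
  rw [← h3]
  simp only [Nat.cast_add, mul_add, add_mul, Finset.sum_add_distrib]
  simp
  ring

theorem Gval_zero_zero {K : ℕ} (r : Fin K → ℕ) (hr : r ≠ 0) : Gval 0 0 r = 0 := by
  simp [Gval, Apoly_eval r hr]

theorem Gval_zero {K : ℕ} (m : ℕ) : Gval 0 m (0 : Fin K → ℕ) = if m = 0 then 1 else 0 := by
  simp only [Gval, Apoly_zero, mul_one]
  have := Int.alternating_sum_range_choose (n := m)
  exact_mod_cast this

/-- prepend a letter -/
def fcons (a : ℕ) (f : ℕ → ℕ) : ℕ → ℕ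
  | 0 => a
  | k+1 => f k

theorem fcons_inj (a : ℕ) : Function.Injective (fcons a) := by
  intro f g h
  funext k
  exact congrFun h (k+1)

open Classical in
/-- the words -/
noncomputable def Wd {K : ℕ} : ℕ → ℕ → ℕ → (Fin K → ℕ) → Finset (ℕ → ℕ)
  | 0, h, m, r => if h = 0 ∧ m = 0 ∧ r = 0 then {fun _ => 0} else ∅
  | _+1, 0, 0, _ => ∅
  | N+1, 0, m+1, r => (Finset.univ.filter (fun i => 0 < r i)).biUnion
      (fun i => (Wd N i.1 m (dec r i)).image (fcons (i.1+1)))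
  | N+1, h+1, m, r => ((Wd N h m r).image (fcons 0)) ∪
      ((Finset.univ.filter (fun i => 0 < r i)).biUnion
      (fun i => (Wd N (h+1+i.1) m (dec r i)).image (fcons (i.1+1))))

open Classical in
theorem card_bi {K : ℕ} (s : Finset (Fin K)) (T : Fin K → Finset (ℕ → ℕ)) :
    (s.biUnion (fun i => (T i).image (fcons (i.1+1)))).card = ∑ i ∈ s, (T i).card := by
  rw [Finset.card_biUnion]
  · apply Finset.sum_congr rfl
    intro i _
    exact Finset.card_image_of_injective _ (fcons_inj _)
  · intro i _ j _ hij
    simp only [Finset.disjoint_left, Finset.mem_image]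
    rintro f ⟨g, _, rfl⟩ ⟨g', _, h⟩
    have := congrFun h 0
    simp only [fcons] at this
    exact hij (Fin.ext (by omega))

open Classical in
theorem card_un {K : ℕ} (s : Finset (Fin K)) (T : Fin K → Finset (ℕ → ℕ)) (T0 : Finset (ℕ → ℕ)) :
    (T0.image (fcons 0) ∪ s.biUnion (fun i => (T i).image (fcons (i.1+1)))).card
      = T0.card + ∑ i ∈ s, (T i).card := by
  rw [Finset.card_union_of_disjoint, card_bi, Finset.card_image_of_injective _ (fcons_inj _)]
  simp only [Finset.disjoint_left, Finset.mem_image, Finset.mem_biUnion]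
  rintro f ⟨g, _, rfl⟩ ⟨i, _, g', _, h⟩
  have := congrFun h 0
  simp only [fcons] at this
  omega

theorem card_Wd {K : ℕ} (N : ℕ) : ∀ (h m : ℕ) (r : Fin K → ℕ), 
    h + ∑ i, (i.1 + 1) * r i = N → ((Wd N h m r).card : ℚ) = Gval h m r := by
  induction N with
  | zero =>
    intro h m r hN
    have hh : h = 0 := by omega
    have hr : r = 0 := by
      funext i
      have : ∑ i, (i.1 + 1) * r i = 0 := by omega
      have := (Finset.sum_eq_zero_iff.1 this) i (Finset.mem_univ i)
      simpa using this
    subst hh hr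
    rw [Gval_zero]
    by_cases hm : m = 0 <;> simp [Wd, hm]
  | succ N ih =>
    intro h m r hN
    have hd : ∀ i ∈ Finset.univ.filter (fun i => 0 < r i),
        h + i.1 + ∑ j : Fin K, (j.1 + 1) * dec r i j = N := by
      intro i hi
      simp only [Finset.mem_filter, Finset.mem_univ, true_and] at hi
      have := dec_sum r i hi (fun j => j.1+1)
      omega
    rcases h with _ | h
    · rcases m with _ | m
      · rw [Gval_zero_zero]
        · simp [Wd]
        · rintro rfl; simp at hN
      · rw [Gval_rec0, Wd, card_bi]
        push_cast
        apply Finset.sum_congr rfl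
        intro i hi
        exact ih _ _ _ (by have := hd i hi; omega)
    · rw [Gval_rec, Wd, card_un]
      push_cast
      rw [ih _ _ _ (by omega)]
      congr 1
      apply Finset.sum_congr rfl
      intro i hi
      exact ih _ _ _ (by have := hd i hi; omega)


/-- word predicate -/
def PW {K : ℕ} (N h m : ℕ) (r : Fin K → ℕ) (f : ℕ → ℕ) : Prop :=
  (∀ j, N ≤ j → f j = 0) ∧ (∀ i ≤ N, i ≤ h + ∑ j ∈ Finset.range i, f j) ∧
  h + ∑ j ∈ Finset.range N, f j = N ∧
  ((Finset.range N).filter (fun i => h + ∑ j ∈ Finset.range i, f j = i)).card = m ∧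
  (∀ i : Fin K, ((Finset.range N).filter (fun j => f j = i.1 + 1)).card = r i) ∧
  ∀ j, f j ≤ K

theorem sum_fcons (a : ℕ) (g : ℕ → ℕ) (i : ℕ) :
    ∑ j ∈ Finset.range (i+1), fcons a g j = ∑ j ∈ Finset.range i, g j + a := by
  rw [Finset.sum_range_succ']; rfl

theorem type_fcons (a : ℕ) (g : ℕ → ℕ) (N c : ℕ) :
    ((Finset.range (N+1)).filter (fun j => fcons a g j = c)).card
      = ((Finset.range N).filter (fun j => g j = c)).card + if a = c then 1 else 0 := by
  rw [Finset.card_filter, Finset.sum_range_succ', Finset.card_filter]; rfl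

theorem touch_fcons (a : ℕ) (g : ℕ → ℕ) (N h : ℕ) (ha : 1 ≤ h + a) :
    ((Finset.range (N+1)).filter (fun i => h + ∑ j ∈ Finset.range i, fcons a g j = i)).card
      = ((Finset.range N).filter (fun i => (h + a - 1) + ∑ j ∈ Finset.range i, g j = i)).card
        + if h = 0 then 1 else 0 := by
  rw [Finset.card_filter, Finset.sum_range_succ', Finset.card_filter]
  congr 1
  apply Finset.sum_congr rfl
  intro i _
  rw [sum_fcons]
  congr 1
  apply propext
  omega

theorem PW_cons {K : ℕ} (N h m : ℕ) (r : Fin K → ℕ) (a : ℕ) (g : ℕ → ℕ) :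
    PW (N+1) h m r (fcons a g) ↔ 1 ≤ h + a ∧ ∃ m', m = m' + (if h = 0 then 1 else 0) ∧
      ((a = 0 ∧ PW N (h+a-1) m' r g) ∨
        ∃ i : Fin K, a = i.1+1 ∧ 0 < r i ∧ PW N (h+a-1) m' (dec r i) g) := by
  constructor
  · rintro ⟨h1, h2, h3, h4, h5, h6⟩
    have ha : 1 ≤ h + a := by
      have := h2 1 (by omega)
      rw [sum_fcons] at this; simpa using this
    refine ⟨ha, _, (h4.symm.trans (touch_fcons a g N h ha)), ?_⟩
    have k1 : ∀ j, N ≤ j → g j = 0 := fun j hj => h1 (j+1) (by omega)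
    have k2 : ∀ i ≤ N, i ≤ (h + a - 1) + ∑ j ∈ Finset.range i, g j := by
      intro i hi
      have := h2 (i+1) (by omega)
      rw [sum_fcons] at this; omega
    have k3 : (h + a - 1) + ∑ j ∈ Finset.range N, g j = N := by
      rw [sum_fcons] at h3; omega
    have k6 : ∀ j, g j ≤ K := fun j => h6 (j+1)
    rcases a with _ | a
    · left
      refine ⟨rfl, k1, k2, k3, rfl, ?_, k6⟩
      intro i
      rw [← h5 i, type_fcons]; simp
    · right
      have haK : a < K := h6 0
      have hp := h5 ⟨a, haK⟩
      rw [type_fcons] at hp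
      simp only [if_true] at hp
      refine ⟨⟨a, haK⟩, rfl, by omega, k1, k2, k3, rfl, ?_, k6⟩
      intro i
      by_cases hi : i = ⟨a, haK⟩
      · subst hi
        simp only [dec, Function.update_self]; omega
      · simp only [dec, Function.update_of_ne hi]
        rw [← h5 i, type_fcons, if_neg, add_zero]
        intro h; apply hi; apply Fin.ext; simp; omega
  · rintro ⟨ha, m', hm, H⟩
    have main : ∀ r', PW N (h+a-1) m' r' g → a ≤ K → (∀ i : Fin K, r i = r' i + if a = i.1+1 then 1 else 0) →
        PW (N+1) h m r (fcons a g) := by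
      rintro r' ⟨k1, k2, k3, k4, k5, k6⟩ haK hr
      refine ⟨?_, ?_, ?_, ?_, ?_, ?_⟩
      · rintro (_ | j) hj
        · omega
        · exact k1 j (by omega)
      · rintro (_ | i) hi
        · omega
        · have := k2 i (by omega)
          rw [sum_fcons]; omega
      · rw [sum_fcons]; omega
      · rw [touch_fcons a g N h ha, k4, hm]
      · intro i
        rw [type_fcons, k5, hr]
      · rintro (_ | j)
        · exact haK
        · exact k6 j
    rcases H with ⟨rfl, H⟩ | ⟨i, rfl, hi, H⟩
    · exact main r H (by omega) (by simp)
    · refine main _ H i.2 ?_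
      intro j
      by_cases hj : j = i
      · subst hj; simp [dec]; omega
      · simp only [dec, Function.update_of_ne hj]
        rw [if_neg, add_zero]
        intro h; apply hj; apply Fin.ext; omega

theorem fcons_eta (f : ℕ → ℕ) : f = fcons (f 0) (fun k => f (k+1)) := by
  funext k; cases k <;> rfl

theorem fcons_eq {a b : ℕ} {g g' : ℕ → ℕ} : fcons a g = fcons b g' ↔ a = b ∧ g = g' := by
  constructor
  · intro h
    exact ⟨congrFun h 0, by funext k; exact congrFun h (k+1)⟩
  · rintro ⟨rfl, rfl⟩; rfl

theorem mem_Wd {K : ℕ} (N : ℕ) : ∀ (h m : ℕ) (r : Fin K → ℕ) (f : ℕ → ℕ),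
    f ∈ Wd N h m r ↔ PW N h m r f := by
  induction N with
  | zero =>
    intro h m r f
    simp only [Wd, PW]
    constructor
    · split_ifs with hh
      · rintro hf
        obtain ⟨rfl, rfl, rfl⟩ := hh
        simp at hf
        subst hf
        simp
      · simp
    · rintro ⟨h1, _, h3, h4, h5, _⟩
      rw [if_pos]
      · simp; funext j; exact h1 j (by omega)
      · simp at h3 h4 h5
        refine ⟨h3, h4.symm, ?_⟩
        funext i; simp [← h5 i]
  | succ N ih =>
    intro h m r f
    obtain ⟨a, g, rfl⟩ : ∃ a g, f = fcons a g := ⟨_, _, fcons_eta f⟩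
    rw [PW_cons]
    rcases h with _ | h
    · rcases m with _ | m
      · simp [Wd]
      · simp only [Wd, Finset.mem_biUnion, Finset.mem_filter, Finset.mem_univ, true_and,
          Finset.mem_image, fcons_eq, ih]
        constructor
        · rintro ⟨i, hi, g', hg, rfl, rfl⟩
          exact ⟨by omega, m, by simp, Or.inr ⟨i, rfl, hi, by simpa using hg⟩⟩
        · rintro ⟨h1, m', hm, ⟨rfl, _⟩ | ⟨i, rfl, hi, H⟩⟩
          · omega
          · have : m = m' := by simpa using hm
            subst this
            exact ⟨i, hi, g, by simpa using H, rfl, rfl⟩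
    · simp only [Wd, Finset.mem_union, Finset.mem_biUnion, Finset.mem_filter, Finset.mem_univ,
          true_and, Finset.mem_image, fcons_eq, ih]
      constructor
      · rintro (⟨g', hg, rfl, rfl⟩ | ⟨i, hi, g', hg, rfl, rfl⟩)
        · exact ⟨by omega, m, by simp, Or.inl ⟨rfl, by simpa using hg⟩⟩
        · exact ⟨by omega, m, by simp, Or.inr ⟨i, rfl, hi, by
            have : h + 1 + (i.1 + 1) - 1 = h + 1 + i.1 := by omega
            rwa [this]⟩⟩
      · rintro ⟨h1, m', hm, ⟨rfl, H⟩ | ⟨i, rfl, hi, H⟩⟩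
        · have : m = m' := by simpa using hm
          subst this
          exact Or.inl ⟨g, by simpa using H, rfl, rfl⟩
        · have : m = m' := by simpa using hm
          subst this
          have e : h + 1 + (i.1 + 1) - 1 = h + 1 + i.1 := by omega
          rw [e] at H
          exact Or.inr ⟨i, hi, g, H, rfl, rfl⟩


/-- minimum of the block -/
noncomputable def lab {n : ℕ} (π : SetPartitionOn n) (x : ℕ) : ℕ := sInf {y | y ∈ π.part x}

/-- fiber sizes -/
def fibc (n : ℕ) (p : ℕ → ℕ) (j : ℕ) : ℕ := ((Finset.Icc 1 n).filter (fun x => p x = j + 1)).card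

theorem lab_mem {n : ℕ} (π : SetPartitionOn n) {x : ℕ} (hx : x ∈ Finset.Icc 1 n) :
    lab π x ∈ π.part x :=
  Nat.sInf_mem (s := {y | y ∈ π.part x}) ⟨x, π.mem_part hx⟩

theorem lab_le_of_mem {n : ℕ} (π : SetPartitionOn n) {x y : ℕ} (hy : y ∈ π.part x) :
    lab π x ≤ y := Nat.sInf_le hy

theorem lab_le {n : ℕ} (π : SetPartitionOn n) {x : ℕ} (hx : x ∈ Finset.Icc 1 n) :
    lab π x ≤ x := lab_le_of_mem π (π.mem_part hx)

theorem lab_Icc {n : ℕ} (π : SetPartitionOn n) {x : ℕ} (hx : x ∈ Finset.Icc 1 n) :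
    lab π x ∈ Finset.Icc 1 n := π.part_subset x (lab_mem π hx)

theorem lab_eq_iff {n : ℕ} (π : SetPartitionOn n) {x y : ℕ} (hx : x ∈ Finset.Icc 1 n)
    (hy : y ∈ Finset.Icc 1 n) : lab π x = lab π y ↔ π.part x = π.part y := by
  constructor
  · intro h
    have h1 := lab_mem π hx
    have h2 := lab_mem π hy
    rw [← h] at h2
    rw [← π.part_eq_of_mem (π.part_mem.2 hx) h1, ← π.part_eq_of_mem (π.part_mem.2 hy) h2]
  · intro h; simp only [lab, h]

theorem lab_idem {n : ℕ} (π : SetPartitionOn n) {x : ℕ} (hx : x ∈ Finset.Icc 1 n) :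
    lab π (lab π x) = lab π x := by
  rw [lab_eq_iff π (lab_Icc π hx) hx]
  exact π.part_eq_of_mem (π.part_mem.2 hx) (lab_mem π hx)

theorem part_eq_filter {n : ℕ} (π : SetPartitionOn n) {x : ℕ} (hx : x ∈ Finset.Icc 1 n) :
    π.part x = (Finset.Icc 1 n).filter (fun y => lab π y = lab π x) := by
  ext y
  rw [Finset.mem_filter]
  constructor
  · intro hy
    have hy' := π.part_subset x hy
    exact ⟨hy', (lab_eq_iff π hy' hx).2 (π.part_eq_of_mem (π.part_mem.2 hx) hy)⟩
  · rintro ⟨hy, h⟩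
    rw [← (lab_eq_iff π hy hx).1 h]
    exact π.mem_part hy

theorem ext_lab {n : ℕ} (π σ : SetPartitionOn n) (h : ∀ x ∈ Finset.Icc 1 n, lab π x = lab σ x) :
    π = σ := by
  have key : ∀ π σ : SetPartitionOn n, (∀ x ∈ Finset.Icc 1 n, lab π x = lab σ x) →
      π.parts ⊆ σ.parts := by
    intro π σ h B hB
    obtain ⟨x, hx⟩ := π.nonempty_of_mem_parts hB
    have hx' : x ∈ Finset.Icc 1 n := π.le hB hx
    rw [← π.part_eq_of_mem hB hx]
    have : π.part x = σ.part x := by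
      rw [part_eq_filter π hx', part_eq_filter σ hx']
      apply Finset.filter_congr
      intro y hy
      rw [h x hx', h y hy]
    rw [this]
    exact σ.part_mem.2 hx'
  exact Finpartition.ext (Finset.Subset.antisymm (key _ _ h) (key _ _ (fun x hx => (h x hx).symm)))

theorem sum_fibc (n : ℕ) (p : ℕ → ℕ) (hp : ∀ x ∈ Finset.Icc 1 n, 1 ≤ p x) (i : ℕ) :
    ∑ j ∈ Finset.range i, fibc n p j = ((Finset.Icc 1 n).filter (fun x => p x ≤ i)).card := by
  induction i with
  | zero =>
    simp only [Finset.range_zero, Finset.sum_empty]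
    symm
    rw [Finset.card_eq_zero, Finset.filter_eq_empty_iff]
    intro x hx; have := hp x hx; omega
  | succ i ih =>
    rw [Finset.sum_range_succ, ih, fibc, ← Finset.card_union_of_disjoint]
    · congr 1
      ext x
      simp only [Finset.mem_union, Finset.mem_filter]
      constructor
      · rintro (⟨h, h'⟩ | ⟨h, h'⟩) <;> exact ⟨h, by omega⟩
      · rintro ⟨h, h'⟩
        rcases Nat.lt_or_ge (p x) (i+1) with h2 | h2
        · exact Or.inl ⟨h, by omega⟩
        · exact Or.inr ⟨h, by omega⟩
    · rw [Finset.disjoint_left]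
      intro x
      simp only [Finset.mem_filter]
      rintro ⟨_, h⟩ ⟨_, h'⟩
      omega

theorem sum_fibc_ge (n : ℕ) (p : ℕ → ℕ) (hp : ∀ x ∈ Finset.Icc 1 n, 1 ≤ p x)
    (hp' : ∀ x ∈ Finset.Icc 1 n, p x ≤ x) (i : ℕ) (hi : i ≤ n) :
    i ≤ ∑ j ∈ Finset.range i, fibc n p j := by
  rw [sum_fibc n p hp]
  calc i = (Finset.Icc 1 i).card := by simp
    _ ≤ _ := by
      apply Finset.card_le_card
      intro x hx
      simp only [Finset.mem_Icc] at hx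
      have hx' : x ∈ Finset.Icc 1 n := by rw [Finset.mem_Icc]; omega
      exact Finset.mem_filter.2 ⟨hx', (hp' x hx').trans hx.2⟩

theorem sum_fibc_eq (n : ℕ) (p : ℕ → ℕ) (hp : ∀ x ∈ Finset.Icc 1 n, 1 ≤ p x)
    (hp' : ∀ x ∈ Finset.Icc 1 n, p x ≤ x) (i : ℕ) (hi : i ≤ n) :
    ∑ j ∈ Finset.range i, fibc n p j = i ↔ ∀ x ∈ Finset.Icc 1 n, i < x → i < p x := by
  rw [sum_fibc n p hp]
  have hsub : Finset.Icc 1 i ⊆ (Finset.Icc 1 n).filter (fun x => p x ≤ i) := by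
    intro x hx
    simp only [Finset.mem_Icc] at hx
    have hx' : x ∈ Finset.Icc 1 n := by rw [Finset.mem_Icc]; omega
    exact Finset.mem_filter.2 ⟨hx', (hp' x hx').trans hx.2⟩
  constructor
  · intro h x hx hix
    by_contra hc
    have := Finset.eq_of_subset_of_card_le hsub (by rw [h]; simp)
    have hm : x ∈ (Finset.Icc 1 n).filter (fun x => p x ≤ i) :=
      Finset.mem_filter.2 ⟨hx, by omega⟩
    rw [← this, Finset.mem_Icc] at hm
    omega
  · intro h
    have : (Finset.Icc 1 n).filter (fun x => p x ≤ i) = Finset.Icc 1 i := by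
      apply Finset.Subset.antisymm _ hsub
      intro x hx
      rw [Finset.mem_filter] at hx
      rw [Finset.mem_Icc]
      have h1 := Finset.mem_Icc.1 hx.1
      refine ⟨h1.1, ?_⟩
      by_contra hc
      have := h x hx.1 (by omega)
      omega
    rw [this]; simp

theorem isCut_iff {n : ℕ} (π : SetPartitionOn n) (i : ℕ) :
    IsCut π i ↔ 1 ≤ i ∧ i ≤ n - 1 ∧ ∀ x ∈ Finset.Icc 1 n, i < x → i < lab π x := by
  unfold IsCut
  refine and_congr_right fun _ => and_congr_right fun _ => ?_
  constructor
  · intro h x hx hix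
    rcases h _ (π.part_mem.2 hx) with h | h
    · have := h x (π.mem_part hx); omega
    · exact h _ (lab_mem π hx)
  · intro h B hB
    by_cases hc : ∀ x ∈ B, x ≤ i
    · exact Or.inl hc
    · right
      push Not at hc
      obtain ⟨x, hx, hix⟩ := hc
      intro y hy
      have h1 := h x (π.le hB hx) hix
      rw [← π.part_eq_of_mem hB hx] at hy
      have := lab_le_of_mem π hy
      omega

theorem lab_pos {n : ℕ} (π : SetPartitionOn n) : ∀ x ∈ Finset.Icc 1 n, 1 ≤ lab π x :=
  fun _ hx => (Finset.mem_Icc.1 (lab_Icc π hx)).1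

theorem touch_eq {n : ℕ} (hn : 1 ≤ n) (π : SetPartitionOn n) :
    ((Finset.range n).filter
      (fun i => 0 + ∑ j ∈ Finset.range i, fibc n (lab π) j = i)).card = cutCount π + 1 := by
  have : (Finset.range n).filter (fun i => 0 + ∑ j ∈ Finset.range i, fibc n (lab π) j = i)
     = insert 0 ((Finset.Icc 1 (n-1)).filter
        (fun i => ∑ j ∈ Finset.range i, fibc n (lab π) j = i)) := by
    ext i
    simp only [Finset.mem_filter, Finset.mem_range, Finset.mem_insert, Finset.mem_Icc, zero_add]
    constructor
    · rintro ⟨h1, h2⟩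
      rcases Nat.eq_zero_or_pos i with h | h
      · exact Or.inl h
      · exact Or.inr ⟨⟨h, by omega⟩, h2⟩
    · rintro (rfl | ⟨h1, h2⟩)
      · exact ⟨by omega, by simp⟩
      · exact ⟨by omega, h2⟩
  rw [this, Finset.card_insert_of_notMem (by simp), cutCount, ← Set.ncard_coe_finset]
  congr 2
  ext i
  simp only [Finset.coe_filter, Set.mem_ofPred_eq, isCut_iff, Finset.mem_Icc, and_assoc]
  refine and_congr_right fun _ => and_congr_right fun h => ?_
  rw [sum_fibc_eq n _ (lab_pos π) (fun x hx => lab_le π hx) i (by omega)]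
  simp only [Finset.mem_Icc, and_imp]

theorem type_eq {n : ℕ} (π : SetPartitionOn n) (c : ℕ) :
    ((Finset.range n).filter (fun j => fibc n (lab π) j = c + 1)).card =
      (π.parts.filter (fun B => B.card = c + 1)).card := by
  have key : ∀ j, j ∈ (Finset.range n).filter (fun j => fibc n (lab π) j = c + 1) →
      j + 1 ∈ Finset.Icc 1 n ∧ lab π (j+1) = j+1 ∧ (π.part (j+1)).card = c + 1 := by
    intro j hj
    rw [Finset.mem_filter, Finset.mem_range] at hj
    have h1 : j + 1 ∈ Finset.Icc 1 n := by rw [Finset.mem_Icc]; omega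
    have : 0 < fibc n (lab π) j := by omega
    obtain ⟨x, hx⟩ := Finset.card_pos.1 this
    rw [Finset.mem_filter] at hx
    have h2 : lab π (j+1) = j + 1 := by
      rw [← hx.2]; exact lab_idem π hx.1
    refine ⟨h1, h2, ?_⟩
    rw [part_eq_filter π h1, h2]
    exact hj.2
  apply Finset.card_bij (fun j _ => π.part (j+1))
  · intro j hj
    obtain ⟨h1, _, h3⟩ := key j hj
    exact Finset.mem_filter.2 ⟨π.part_mem.2 h1, h3⟩
  · intro j hj j' hj' h
    obtain ⟨h1, h2, _⟩ := key j hj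
    obtain ⟨h1', h2', _⟩ := key j' hj'
    have := (lab_eq_iff π h1 h1').2 h
    omega
  · intro B hB
    rw [Finset.mem_filter] at hB
    obtain ⟨x, hx⟩ := π.nonempty_of_mem_parts hB.1
    have hx' : x ∈ Finset.Icc 1 n := π.le hB.1 hx
    have hl := Finset.mem_Icc.1 (lab_Icc π hx')
    have e : lab π x - 1 + 1 = lab π x := by omega
    have e2 : π.part x = B := π.part_eq_of_mem hB.1 hx
    refine ⟨lab π x - 1, ?_, ?_⟩
    · rw [Finset.mem_filter, Finset.mem_range]
      refine ⟨by omega, ?_⟩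
      rw [fibc, e, ← part_eq_filter π hx', e2]
      exact hB.2
    · rw [e, ← e2]
      exact π.part_eq_of_mem (π.part_mem.2 hx') (lab_mem π hx')

theorem PW_iff {n : ℕ} (hn : 1 ≤ n) (m : ℕ) (hm : 1 ≤ m) (π : SetPartitionOn n) (r : Fin n → ℕ) :
    PW n 0 m r (fibc n (lab π)) ↔ HasType π r ∧ cutCount π = m - 1 := by
  unfold PW
  rw [touch_eq hn]
  simp only [type_eq]
  constructor
  · rintro ⟨_, _, _, h4, h5, _⟩
    exact ⟨h5, by omega⟩
  · rintro ⟨h5, h4⟩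
    refine ⟨?_, ?_, ?_, by omega, h5, ?_⟩
    · intro j hj
      rw [fibc, Finset.card_eq_zero, Finset.filter_eq_empty_iff]
      intro x hx
      have := Finset.mem_Icc.1 (lab_Icc π hx)
      omega
    · intro i hi
      rw [zero_add]
      exact sum_fibc_ge n _ (lab_pos π) (fun x hx => lab_le π hx) i hi
    · rw [zero_add, sum_fibc_eq n _ (lab_pos π) (fun x hx => lab_le π hx) n le_rfl]
      intro x hx
      have := Finset.mem_Icc.1 hx
      omega
    · intro j
      refine (Finset.card_filter_le _ _).trans ?_
      simp

/-- number of earlier elements with label b -/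
def used (p : ℕ → ℕ) (x b : ℕ) : ℕ := ((Finset.Ico 1 x).filter (fun y => p y = b)).card

theorem used_lt {n : ℕ} (p : ℕ → ℕ) {x y : ℕ} (b : ℕ) (hb : 1 ≤ b) (hx : 1 ≤ x) (hxy : x ≤ y)
    (hy : y ≤ n) (h : p y = b) : used p x b < fibc n p (b-1) := by
  apply Finset.card_lt_card
  rw [Finset.ssubset_iff_of_subset]
  · refine ⟨y, ?_, ?_⟩
    · rw [Finset.mem_filter, Finset.mem_Icc]; omega
    · rw [Finset.mem_filter, Finset.mem_Ico]; omega
  · intro z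
    rw [Finset.mem_filter, Finset.mem_Ico, Finset.mem_filter, Finset.mem_Icc]; omega

theorem exists_of_used_lt {n : ℕ} (p : ℕ → ℕ) {x b : ℕ} (hb : 1 ≤ b)
    (h : used p x b < fibc n p (b-1)) : ∃ y, x ≤ y ∧ y ∈ Finset.Icc 1 n ∧ p y = b := by
  by_contra hc
  push Not at hc
  apply absurd h
  rw [not_lt]
  apply Finset.card_le_card
  intro z
  rw [Finset.mem_filter, Finset.mem_filter, Finset.mem_Ico]
  rintro ⟨h1, h2⟩
  have h1' := Finset.mem_Icc.1 h1
  refine ⟨⟨h1'.1, ?_⟩, by omega⟩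
  by_contra h3
  exact hc z (by omega) h1 (by omega)

theorem nc_lab {n : ℕ} (π : SetPartitionOn n) (hπ : Noncrossing π) {x b : ℕ}
    (hx : x ∈ Finset.Icc 1 n) (hb : 1 ≤ b) (hbx : b ≤ x)
    (h : used (lab π) x b < fibc n (lab π) (b-1)) : b ≤ lab π x := by
  obtain ⟨y, hxy, hy, hyb⟩ := exists_of_used_lt _ hb h
  by_contra hc
  apply hπ
  have hx' := Finset.mem_Icc.1 hx
  have hlb : lab π b = b := by rw [← hyb]; exact lab_idem π hy
  have hbI : b ∈ Finset.Icc 1 n := by rw [Finset.mem_Icc]; omega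
  have hbx' : b ≠ x := by rintro rfl; omega
  have hyx' : y ≠ x := by rintro rfl; omega
  refine ⟨lab π x, b, x, y, by omega, by omega, by omega, π.part x, π.part_mem.2 hx,
    π.part y, π.part_mem.2 hy, ?_, lab_mem π hx, π.mem_part hx, ?_, π.mem_part hy⟩
  · intro h
    rw [← lab_eq_iff π hx hy] at h
    omega
  · rw [← hyb]; exact lab_mem π hy

theorem fibc_inj {n : ℕ} (π σ : SetPartitionOn n) (hπ : Noncrossing π) (hσ : Noncrossing σ)
    (h : fibc n (lab π) = fibc n (lab σ)) : π = σ := by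
  apply ext_lab
  intro x
  induction x using Nat.strong_induction_on with
  | _ x ih =>
    intro hx
    have hx' := Finset.mem_Icc.1 hx
    have hu : ∀ b, used (lab π) x b = used (lab σ) x b := by
      intro b
      unfold used
      congr 1
      apply Finset.filter_congr
      intro y hy
      rw [Finset.mem_Ico] at hy
      rw [ih y hy.2 (by rw [Finset.mem_Icc]; omega)]
    apply le_antisymm
    · apply nc_lab σ hσ hx (lab_pos π x hx) (lab_le π hx)
      rw [← hu, ← h]
      exact used_lt _ _ (lab_pos π x hx) hx'.1 le_rfl hx'.2 rfl
    · apply nc_lab π hπ hx (lab_pos σ x hx) (lab_le σ hx)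
      rw [hu, h]
      exact used_lt _ _ (lab_pos σ x hx) hx'.1 le_rfl hx'.2 rfl


/-- greedy labelling -/
def Greedy (n : ℕ) (f p : ℕ → ℕ) : Prop := ∀ x ∈ Finset.Icc 1 n, 1 ≤ p x ∧ p x ≤ x ∧
  used p x (p x) < f (p x - 1) ∧ ∀ b, 1 ≤ b → b ≤ x → used p x b < f (b-1) → b ≤ p x

theorem used_congr (p q : ℕ → ℕ) (x b : ℕ) (h : ∀ y, y < x → p y = q y) :
    used p x b = used q x b := by
  unfold used
  congr 1
  apply Finset.filter_congr
  intro y hy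
  rw [Finset.mem_Ico] at hy
  rw [h y hy.2]

theorem used_succ_eq (n : ℕ) (p : ℕ → ℕ) (j : ℕ) : used p (n+1) (j+1) = fibc n p j := by
  unfold used fibc
  congr 1

theorem exists_greedy (n : ℕ) (f : ℕ → ℕ) : (∀ i ≤ n, i ≤ ∑ j ∈ Finset.range i, f j) →
    ∃ p, Greedy n f p := by
  induction n with
  | zero =>
    intro _
    refine ⟨id, ?_⟩
    intro x hx
    simp at hx
  | succ N ih =>
    intro hb
    obtain ⟨p, hp⟩ := ih (fun i hi => hb i (by omega))
    have hne : ((Finset.Icc 1 (N+1)).filter (fun b => used p (N+1) b < f (b-1))).Nonempty := by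
      by_contra hc
      rw [Finset.not_nonempty_iff_eq_empty, Finset.filter_eq_empty_iff] at hc
      have h1 : ∑ j ∈ Finset.range (N+1), f j ≤ ∑ j ∈ Finset.range (N+1), fibc N p j := by
        apply Finset.sum_le_sum
        intro j hj
        rw [Finset.mem_range] at hj
        have := hc (x := j+1) (by rw [Finset.mem_Icc]; omega)
        rw [used_succ_eq] at this
        simpa using this
      rw [sum_fibc N p (fun x hx => (hp x hx).1)] at h1
      have h2 := Finset.card_filter_le (Finset.Icc 1 N) (fun x => p x ≤ N+1)
      have h3 := hb (N+1) le_rfl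
      simp at h2
      omega
    obtain ⟨v, hv, hmax⟩ := Finset.exists_max_image _ id hne
    rw [Finset.mem_filter, Finset.mem_Icc] at hv
    simp only [id, Finset.mem_filter, Finset.mem_Icc] at hmax
    have hu : ∀ x b, x ≤ N+1 → used (Function.update p (N+1) v) x b = used p x b := by
      intro x b hx
      apply used_congr
      intro y hy
      rw [Function.update_of_ne (by omega)]
    refine ⟨Function.update p (N+1) v, ?_⟩
    intro x hx
    rw [Finset.mem_Icc] at hx
    simp only [hu x _ hx.2]
    by_cases hxN : x = N+1
    · subst hxN
      simp only [Function.update_self]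
      exact ⟨hv.1.1, hv.1.2, hv.2, fun b h1 h2 h3 => hmax b ⟨⟨h1, h2⟩, h3⟩⟩
    · simp only [Function.update_of_ne hxN]
      exact hp x (by rw [Finset.mem_Icc]; omega)

theorem greedy_used_le {n : ℕ} {f p : ℕ → ℕ} (hp : Greedy n f p) (b : ℕ) :
    ∀ x, x ≤ n → used p (x+1) b ≤ f (b-1) := by
  intro x
  induction x with
  | zero => intro _; simp [used]
  | succ x ih =>
    intro hx
    have h1 : used p (x+1+1) b = used p (x+1) b + if p (x+1) = b then 1 else 0 := by
      unfold used
      rw [← Finset.insert_Ico_right_eq_Ico_add_one (by omega), Finset.filter_insert]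
      split_ifs with h
      · rw [Finset.card_insert_of_notMem (by simp)]
      · rfl
    rw [h1]
    split_ifs with h
    · have := (hp (x+1) (by rw [Finset.mem_Icc]; omega)).2.2.1
      rw [h] at this
      omega
    · exact ih (by omega)

theorem greedy_fibc {n : ℕ} {f p : ℕ → ℕ} (hp : Greedy n f p)
    (hs : ∑ j ∈ Finset.range n, f j = n) (h0 : ∀ j, n ≤ j → f j = 0) : fibc n p = f := by
  have hle : ∀ j, fibc n p j ≤ f j := by
    intro j
    rw [← used_succ_eq]
    exact greedy_used_le hp (j+1) n le_rfl
  have hsum : ∑ j ∈ Finset.range n, fibc n p j = n := by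
    rw [sum_fibc_eq n p (fun x hx => (hp x hx).1) (fun x hx => (hp x hx).2.1) n le_rfl]
    intro x hx
    have := Finset.mem_Icc.1 hx
    omega
  have := (Finset.sum_eq_sum_iff_of_le (fun j _ => hle j)).1 (hsum.trans hs.symm)
  funext j
  rcases Nat.lt_or_ge j n with h | h
  · exact this j (Finset.mem_range.2 h)
  · have := hle j
    rw [h0 j h] at this ⊢
    omega

theorem greedy_idem {n : ℕ} {f p : ℕ → ℕ} (hp : Greedy n f p) {x : ℕ} (hx : x ∈ Finset.Icc 1 n) :
    p (p x) = p x := by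
  obtain ⟨h1, h2, h3, _⟩ := hp x hx
  rw [Finset.mem_Icc] at hx
  obtain ⟨k1, k2, _, k4⟩ := hp (p x) (by rw [Finset.mem_Icc]; omega)
  apply le_antisymm k2
  apply k4 _ h1 le_rfl
  have : used p (p x) (p x) = 0 := by
    unfold used
    rw [Finset.card_eq_zero, Finset.filter_eq_empty_iff]
    intro y hy
    rw [Finset.mem_Ico] at hy
    have := (hp y (by rw [Finset.mem_Icc]; omega)).2.1
    omega
  omega

theorem exists_partition {n : ℕ} {f p : ℕ → ℕ} (hp : Greedy n f p) (hf : fibc n p = f) :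
    ∃ σ : SetPartitionOn n, Noncrossing σ ∧ fibc n (lab σ) = f := by
  classical
  let σ : SetPartitionOn n := Finpartition.ofSetSetoid (Setoid.ker p) (Finset.Icc 1 n)
  have hm : ∀ x y, y ∈ σ.part x ↔ x ∈ Finset.Icc 1 n ∧ y ∈ Finset.Icc 1 n ∧ p x = p y := by
    intro x y
    exact Finpartition.mem_part_ofSetSetoid_iff_rel _
  have hl : ∀ x ∈ Finset.Icc 1 n, lab σ x = p x := by
    intro x hx
    apply le_antisymm
    · apply lab_le_of_mem
      have hx' := Finset.mem_Icc.1 hx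
      have := hp x hx
      rw [hm]
      exact ⟨hx, by rw [Finset.mem_Icc]; omega, (greedy_idem hp hx).symm⟩
    · have := (hm x _).1 (lab_mem σ hx)
      rw [this.2.2]
      exact (hp _ this.2.1).2.1
  refine ⟨σ, ?_, ?_⟩
  · rintro ⟨a, b, c, d, hab, hbc, hcd, B, hB, B', hB', hne, ha, hc, hb, hd⟩
    have ia : a ∈ Finset.Icc 1 n := σ.le hB ha
    have ic : c ∈ Finset.Icc 1 n := σ.le hB hc
    have ib : b ∈ Finset.Icc 1 n := σ.le hB' hb
    have id' : d ∈ Finset.Icc 1 n := σ.le hB' hd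
    have ea := σ.part_eq_of_mem hB ha
    have eb := σ.part_eq_of_mem hB' hb
    rw [← ea] at hc
    rw [← eb] at hd
    have hac := ((hm _ _).1 hc).2.2
    have hbd := ((hm _ _).1 hd).2.2
    have hpne : p a ≠ p b := by
      rw [← hl a ia, ← hl b ib, Ne, lab_eq_iff σ ia ib, ea, eb]
      exact hne
    obtain ⟨a1, a2, -, -⟩ := hp a ia
    obtain ⟨b1, b2, -, b4⟩ := hp b ib
    obtain ⟨c1, c2, -, c4⟩ := hp c ic
    rw [Finset.mem_Icc] at ia ib ic id'
    have l1 : p a ≤ p b := by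
      apply b4 _ a1 (by omega)
      have := used_lt (n := n) p (p a) a1 ib.1 hbc.le ic.2 hac.symm
      rwa [hf] at this
    have l2 : p b ≤ p c := by
      apply c4 _ b1 (by omega)
      have := used_lt (n := n) p (p b) b1 ic.1 hcd.le id'.2 hbd.symm
      rwa [hf] at this
    omega
  · rw [← hf]
    funext j
    unfold fibc
    congr 1
    apply Finset.filter_congr
    intro x hx
    rw [hl x hx]

theorem card_aux {α : Type*} (Q : α → Prop) (S : Finset (ℕ → ℕ)) (g : α → (ℕ → ℕ))
    (h1 : ∀ a, Q a → g a ∈ S) (h2 : ∀ a b, Q a → Q b → g a = g b → a = b)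
    (h3 : ∀ f ∈ S, ∃ a, Q a ∧ g a = f) : Nat.card {a // Q a} = S.card := by
  rw [← Nat.card_eq_finsetCard]
  apply Nat.card_eq_of_bijective (fun a : {a // Q a} => (⟨g a.1, h1 a.1 a.2⟩ : {f // f ∈ S}))
  constructor
  · rintro ⟨a, ha⟩ ⟨b, hb⟩ h
    exact Subtype.ext (h2 a b ha hb (congrArg Subtype.val h))
  · rintro ⟨f, hf⟩
    obtain ⟨a, ha, h⟩ := h3 f hf
    exact ⟨⟨a, ha⟩, Subtype.ext h⟩

theorem hcard_aux (n : ℕ) (hn : 1 ≤ n) (m : ℕ) (hm : 1 ≤ m) (r : Fin n → ℕ) :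
    Nat.card {π : SetPartitionOn n // Noncrossing π ∧ HasType π r ∧ cutCount π = m - 1}
      = (Wd n 0 m r).card := by
  apply card_aux _ _ (fun π => fibc n (lab π))
  · intro π hπ
    rw [mem_Wd, PW_iff hn m hm]
    exact hπ.2
  · intro π σ hπ hσ h
    exact fibc_inj π σ hπ.1 hσ.1 h
  · intro f hf
    rw [mem_Wd] at hf
    have hPW := hf
    obtain ⟨h1, h2, h3, _⟩ := hPW
    simp only [zero_add] at h2 h3
    obtain ⟨p, hp⟩ := exists_greedy n f h2
    obtain ⟨σ, hσ, hσf⟩ := exists_partition hp (greedy_fibc hp h3 h1)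
    rw [← hσf, PW_iff hn m hm] at hf
    exact ⟨σ, ⟨hσ, hf⟩, hσf⟩

/-- The number of noncrossing partitions of `[n]` of type `r` with exactly `m` connected
components equals `Σ_{k=1}^{m} (−1)^k C(m,k) A_r(−k)`. -/
theorem card_noncrossing_components_eq_alternating_sum (n : ℕ) (hn : 1 ≤ n) (m : ℕ)
    (hm : 1 ≤ m) (r : Fin n → ℕ) (hrv : ∑ i, (i.1 + 1) * r i = n) :
    (Nat.card {π : SetPartitionOn n //
        Noncrossing π ∧ HasType π r ∧ cutCount π = m - 1} : ℚ) =
      ∑ k ∈ Finset.Icc 1 m, (-1 : ℚ) ^ k * (m.choose k : ℚ) * (Apoly r).eval (-(k : ℚ)) := by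
  have hr : r ≠ 0 := by
    rintro rfl
    simp at hrv
    omega
  rw [hcard_aux n hn m hm r, card_Wd n 0 m r (by omega), Gval, Finset.range_eq_Ico,
    Finset.sum_eq_sum_Ico_succ_bot (by omega)]
  have h0 : (Apoly r).eval (0 : ℚ) = 0 := by simp [Apoly_eval r hr]
  simp only [Nat.cast_zero, sub_zero, h0, mul_zero, zero_add, zero_sub]
  rfl
end

section
/- Let n > 1 and let r = (r_1, …, r_n) ∈ ℕ^n satisfy r_1 + 2r_2 + ⋯ + n·r_n = n and |r| := r_1 + ⋯ + r_n < n. For a set partition π of [n], define the word ψ(π) = w_1 w_2 ⋯ w_{n−1} by: w_i is the letter j if i is the minimal element of a block of π of size j, and w_i is the letter 0 otherwise. Then π ↦ ψ(π) is a bijection from the set of connected nonnesting set partitions of [n] of type r onto ℬ(r), the set of words of length n − 1 lying in ℬ with exactly n − |r| − 1 occurrences of letter 0 and exactly r_i occurrences of letter i for 1 ≤ i ≤ n. -/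
/-- The weight of a word: the sum of `(a - 1)` over its letters, as an integer. -/
def wt (w : List ℕ) : ℤ := (w.map (fun a => (a : ℤ) - 1)).sum

/-- The set `ℬ` of words of weight 1 all of whose nonempty prefixes have positive weight. -/
def Bset : Set (List ℕ) :=
  {w | wt w = 1 ∧ ∀ j, 0 < j → j ≤ w.length → 0 < wt (w.take j)}

/-- The word `ψ(π) = w_1 ⋯ w_{n-1}`: `w_i` is the letter `j` if `i` is the minimal element
of a block of `π` of size `j`, and is the letter `0` otherwise.  (The `i`-th letter is
computed as the sum of `|B|` over the (at most one) block `B` whose minimum is `i`.) -/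
def psi (n : ℕ) (π : SetPartitionOn n) : List ℕ :=
  (List.range (n - 1)).map (fun k =>
    (π.parts.filter (fun B => (k + 1) ∈ B ∧ ∀ x ∈ B, k + 1 ≤ x)).sum Finset.card)

def cnt (m : ℕ → ℕ) (k r : ℕ) : ℕ := ((Finset.Icc 1 k).filter (fun x => m x = r)).card

def Rt (n : ℕ) (m : ℕ → ℕ) : Prop := ∀ x, 1 ≤ x → x ≤ n → 1 ≤ m x ∧ m x ≤ x ∧ m (m x) = m x

def NN (n : ℕ) (m : ℕ → ℕ) : Prop := ∀ a b c d, 1 ≤ a → a < b → b < c → c < d → d ≤ n →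
  m a = m d → m b = m c → (∀ k, a < k → k < d → m k ≠ m a) →
  (∀ k, b < k → k < c → m k ≠ m b) → False

lemma cnt_succ (m : ℕ → ℕ) (k r : ℕ) :
    cnt m (k+1) r = cnt m k r + if m (k+1) = r then 1 else 0 := by
  unfold cnt
  rw [← Finset.insert_Icc_right_eq_Icc_add_one (by omega), Finset.filter_insert]
  split_ifs with h
  · rw [Finset.card_insert_of_notMem (by simp)]
  · rfl

lemma cnt_congr {m m' : ℕ → ℕ} {k : ℕ} (h : ∀ x, 1 ≤ x → x ≤ k → m x = m' x) (r : ℕ) :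
    cnt m k r = cnt m' k r := by
  unfold cnt
  congr 1
  apply Finset.filter_congr
  intro x hx
  rw [Finset.mem_Icc] at hx
  rw [h x hx.1 hx.2]

lemma cnt_mono (m : ℕ → ℕ) {k l : ℕ} (h : k ≤ l) (r : ℕ) : cnt m k r ≤ cnt m l r := by
  apply Finset.card_le_card
  apply Finset.filter_subset_filter
  exact Finset.Icc_subset_Icc_right h

lemma cnt_lt (m : ℕ → ℕ) {k l : ℕ} (i : ℕ) (h1 : k < i) (h2 : i ≤ l) :
    cnt m k (m i) < cnt m l (m i) := by
  obtain ⟨j, rfl⟩ : ∃ j, i = j + 1 := ⟨i - 1, by omega⟩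
  have := cnt_succ m j (m (j+1))
  simp only [if_true] at this
  have := cnt_mono m (show k ≤ j by omega) (m (j+1))
  have := cnt_mono m h2 (m (j+1))
  omega

lemma cnt_lt_ex {m : ℕ → ℕ} {k l r : ℕ} (h : cnt m k r < cnt m l r) :
    ∃ d, k < d ∧ d ≤ l ∧ m d = r := by
  by_contra! hc
  apply absurd h
  rw [not_lt]
  apply Finset.card_le_card
  intro x hx
  simp only [Finset.mem_filter, Finset.mem_Icc] at hx ⊢
  refine ⟨⟨hx.1.1, ?_⟩, hx.2⟩
  by_contra h'
  exact hc x (by omega) hx.1.2 hx.2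

lemma ex_last (P : ℕ → Prop) (i j : ℕ) (hj : j < i) (hP : P j) :
    ∃ p, j ≤ p ∧ p < i ∧ P p ∧ ∀ y, p < y → y < i → ¬ P y := by
  classical
  have h := Nat.findGreatest_spec (P := P) (n := i-1) (m := j) (by omega) hP
  refine ⟨Nat.findGreatest P (i-1), Nat.le_findGreatest (by omega) hP, ?_, h, ?_⟩
  · have := Nat.findGreatest_le (P := P) (i-1); omega
  · intro y h1 h2
    exact Nat.findGreatest_is_greatest h1 (by omega)

lemma cnt_pos {n : ℕ} {m : ℕ → ℕ} (hm : Rt n m) {i : ℕ} (h : cnt m n i ≠ 0) : m i = i := by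
  have := Finset.card_pos.1 (Nat.pos_of_ne_zero h)
  obtain ⟨x, hx⟩ := this
  simp only [Finset.mem_filter, Finset.mem_Icc] at hx
  have := hm x hx.1.1 hx.1.2
  rw [hx.2] at this
  exact this.2.2

lemma uniq_aux {n : ℕ} {m m' : ℕ → ℕ} (hm : Rt n m)
    (hN : NN n m') (hc : ∀ i, 1 ≤ i → i ≤ n → cnt m n i = cnt m' n i)
    {i : ℕ} (hi1 : 1 ≤ i) (hin : i ≤ n) (ih : ∀ x, 1 ≤ x → x < i → m x = m' x)
    {p p' : ℕ} (h1 : 1 ≤ p) (hp : p < i) (hpm : m p = m i) (hpl : ∀ y, p < y → y < i → m y ≠ m i)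
    (hp' : p' < i) (hpm' : m' p' = m' i) (hpl' : ∀ y, p' < y → y < i → m' y ≠ m' i) :
    ¬ p < p' := by
  intro hlt
  have e1 : m' p = m i := by rw [← ih p h1 hp, hpm]
  have hlt' : cnt m' (i-1) (m i) < cnt m' n (m i) := by
    rw [← hc _ (hm i hi1 hin).1 ((hm i hi1 hin).2.1.trans hin),
      ← cnt_congr (m := m) (m' := m') (fun x a b => ih x a (by omega))]
    exact cnt_lt m i (by omega) hin
  obtain ⟨d, hd1, hd2, hd3⟩ := cnt_lt_ex hlt'
  have hex : ∃ d, i ≤ d ∧ d ≤ n ∧ m' d = m i := ⟨d, by omega, hd2, hd3⟩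
  classical
  have hs := Nat.find_spec hex
  have hmin := fun k => Nat.find_min hex (m := k)
  set D := Nat.find hex
  have hDi : D ≠ i := by
    intro h
    rw [h, ← hpm', ← ih p' (by omega) hp'] at hs
    exact hpl p' hlt hp' hs.2.2
  refine hN p p' i D h1 hlt hp' (by omega) hs.2.1 (by rw [e1, hs.2.2]) hpm' ?_ ?_
  · intro k hk1 hk2 hk
    rw [e1] at hk
    rcases lt_or_ge k i with h | h
    · exact hpl k hk1 h (by rw [ih k (by omega) h, hk])
    · exact hmin k hk2 ⟨h, by omega, hk⟩
  · intro k hk1 hk2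
    rw [hpm']
    exact hpl' k hk1 hk2

lemma uniq {n : ℕ} {m m' : ℕ → ℕ} (hm : Rt n m) (hm' : Rt n m') (hN : NN n m)
    (hN' : NN n m') (hc : ∀ i, 1 ≤ i → i ≤ n → cnt m n i = cnt m' n i) :
    ∀ i, 1 ≤ i → i ≤ n → m i = m' i := by
  intro i
  induction i using Nat.strong_induction_on with
  | _ i ih =>
    intro hi1 hin
    have ih' : ∀ x, 1 ≤ x → x < i → m x = m' x := fun x a b => ih x b a (by omega)
    have self : ∀ {m : ℕ → ℕ}, m i = i → cnt m n i ≠ 0 := by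
      intro m h h0
      have := cnt_lt m (k := 0) (l := n) i (by omega) hin
      rw [h] at this
      omega
    by_cases h0 : cnt m n i = 0
    · have h0' := h0
      rw [hc i hi1 hin] at h0'
      have a1 := hm i hi1 hin
      have a2 := hm' i hi1 hin
      have b1 : m i ≠ i := fun h => self h h0
      have b2 : m' i ≠ i := fun h => self h h0'
      obtain ⟨p, q1, q2, q3, q4⟩ := ex_last (fun y => m y = m i) i (m i) (by omega) a1.2.2
      obtain ⟨p', q1', q2', q3', q4'⟩ := ex_last (fun y => m' y = m' i) i (m' i) (by omega) a2.2.2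
      have c1 := uniq_aux hm hN' hc hi1 hin ih' (by omega) q2 q3 q4 q2' q3' q4'
      have c2 := uniq_aux hm' hN (fun i a b => (hc i a b).symm) hi1 hin
        (fun x a b => (ih' x a b).symm) (by omega) q2' q3' q4' q2 q3 q4
      obtain rfl : p = p' := by omega
      rw [← q3, ih' p (by omega) q2]
      exact q3'
    · have h0' := h0
      rw [hc i hi1 hin] at h0'
      rw [cnt_pos hm h0, cnt_pos hm' h0']

lemma sum_cnt {n : ℕ} {m : ℕ → ℕ} (hm : Rt n m) (i : ℕ) :
    ∑ r ∈ Finset.Icc 1 i, cnt m n r = ((Finset.Icc 1 n).filter (fun x => m x ≤ i)).card := by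
  rw [Finset.card_eq_sum_card_fiberwise (f := m) (t := Finset.Icc 1 i)]
  · apply Finset.sum_congr rfl
    intro r hr
    rw [Finset.mem_Icc] at hr
    unfold cnt
    congr 1
    ext x
    simp only [Finset.mem_filter, Finset.mem_Icc]
    constructor
    · rintro ⟨a, b⟩
      exact ⟨⟨a, by omega⟩, b⟩
    · rintro ⟨⟨a, _⟩, b⟩
      exact ⟨a, b⟩
  · intro x hx
    simp only [Finset.coe_filter, Finset.mem_Icc, Set.mem_ofPred_eq] at hx
    have := hm x hx.1.1 hx.1.2
    simp only [Finset.coe_Icc, Set.mem_Icc]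
    omega

lemma sum_cnt_self {n : ℕ} {m : ℕ → ℕ} (hm : Rt n m) :
    ∑ r ∈ Finset.Icc 1 n, cnt m n r = n := by
  rw [sum_cnt hm, Finset.filter_true_of_mem]
  · simp
  · intro x hx
    rw [Finset.mem_Icc] at hx
    exact (hm x hx.1 hx.2).2.1.trans hx.2

lemma exist_aux {n : ℕ} (f : ℕ → ℕ) (hf : ∀ i, 1 ≤ i → i < n → i < ∑ r ∈ Finset.Icc 1 i, f r)
    (hn : 1 < n) (k : ℕ) (hk : k ≤ n) : ∃ m : ℕ → ℕ, Rt k m ∧ (∀ r, cnt m k r ≤ f r) ∧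
      (∀ i, 1 ≤ i → i ≤ k → f i ≠ 0 → m i = i) ∧
      ∀ a b c, 1 ≤ a → a < b → b < c → c ≤ k → m b = m c →
        (∀ y, a < y → y ≤ c → m y ≠ m a) → (∀ y, b < y → y < c → m y ≠ m b) →
        f (m a) ≤ cnt m (c-1) (m a) := by
  induction k with
  | zero =>
    refine ⟨id, fun x _ _ => by omega, fun r => by simp [cnt], fun i _ _ => by omega, ?_⟩
    intro a b c; intros; omega
  | succ k ih =>
    obtain ⟨m, hm, hle, hroot, hnn⟩ := ih (by omega)
    have key : ∃ v, 1 ≤ v ∧ v ≤ k + 1 ∧ (v ≠ k+1 → m v = v) ∧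
        (cnt m k v + 1 ≤ f v) ∧ (f (k+1) ≠ 0 → v = k+1) ∧
        (∀ a b, 1 ≤ a → a < b → b < k+1 → m b = v → v ≠ m a →
          (∀ y, a < y → y < k+1 → m y ≠ m a) → (∀ y, b < y → y < k+1 → m y ≠ m b) →
          f (m a) ≤ cnt m k (m a)) := by
      by_cases h0 : f (k+1) = 0
      · have hk1 : 1 ≤ k := by
          by_contra h
          obtain rfl : k = 0 := by omega
          have := hf 1 le_rfl hn
          simp at this
          simp at h0
          omega
        have hex : ∃ x, 1 ≤ x ∧ x < k+1 ∧ (∀ y, x < y → y < k+1 → m y ≠ m x) ∧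
            cnt m k (m x) < f (m x) := by
          by_contra! hc
          have h1 := hf k hk1 (by omega)
          have h2 := sum_cnt_self hm
          have : ∑ r ∈ Finset.Icc 1 k, f r ≤ ∑ r ∈ Finset.Icc 1 k, cnt m k r := by
            apply Finset.sum_le_sum
            intro r hr
            rw [Finset.mem_Icc] at hr
            by_cases hr0 : f r = 0
            · omega
            have e := hroot r hr.1 hr.2 hr0
            obtain ⟨p, q1, q2, q3, q4⟩ := ex_last (fun y => m y = r) (k+1) r (by omega) e
            have := hc p (by omega) q2 (by intro y; rw [q3]; exact q4 y)
            rwa [q3] at this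
          omega
        classical
        have hs := Nat.find_spec hex
        have hmin := fun k => Nat.find_min hex (m := k)
        set x := Nat.find hex
        have hx := hm x hs.1 (by omega)
        refine ⟨m x, hx.1, by omega, fun _ => hx.2.2, hs.2.2.2, fun h => absurd h0 h, ?_⟩
        intro a b ha hab hb hbx hxa hal hbl
        by_contra! hcon
        have hbx' : b = x := by
          rcases lt_trichotomy b x with h | h | h
          · exact absurd hbx.symm (hbl x h hs.2.1)
          · exact h
          · exact absurd hbx (hs.2.2.1 b h hb)
        exact hmin a (by omega) ⟨ha, by omega, hal, hcon⟩
      · refine ⟨k+1, by omega, le_rfl, fun h => absurd rfl h, ?_, fun _ => rfl, ?_⟩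
        · have : cnt m k (k+1) = 0 := by
            unfold cnt
            rw [Finset.card_eq_zero, Finset.filter_eq_empty_iff]
            intro x hx
            rw [Finset.mem_Icc] at hx
            have := hm x hx.1 hx.2
            omega
          omega
        · intro a b ha hab hb hbv
          have := hm b (by omega) (by omega)
          omega
    obtain ⟨v, v1, v2, v3, v4, v5, v6⟩ := key
    have up : ∀ x, x ≤ k → Function.update m (k+1) v x = m x := by
      intro x hx
      rw [Function.update_of_ne (by omega)]
    have up' : Function.update m (k+1) v (k+1) = v := by simp
    have cn : ∀ l, l ≤ k → ∀ r, cnt (Function.update m (k+1) v) l r = cnt m l r :=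
      fun l hl r => cnt_congr (fun x _ b => up x (by omega)) r
    refine ⟨Function.update m (k+1) v, ?_, ?_, ?_, ?_⟩
    · intro x hx1 hx2
      by_cases h : x = k+1
      · subst h
        rw [up']
        refine ⟨v1, v2, ?_⟩
        by_cases hv : v = k+1
        · nth_rw 2 [hv]; exact up'
        · rw [up v (by omega)]; exact v3 hv
      · have := hm x hx1 (by omega)
        rw [up x (by omega), up _ (by omega)]
        exact this
    · intro r
      rw [cnt_succ, cn k le_rfl, up']
      split_ifs with h
      · subst h; exact v4
      · exact hle r
    · intro i h1 h2 h3
      by_cases h : i = k+1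
      · subst h; rw [up', v5 h3]
      · rw [up i (by omega)]; exact hroot i h1 (by omega) h3
    · intro a b c ha hab hbc hck hbm hal hbl
      rw [up a (by omega)] at hal ⊢
      rw [up b (by omega)] at hbm hbl
      rw [cn _ (by omega)]
      have hbl' : ∀ y, b < y → y < c → m y ≠ m b := by
        intro y y1 y2
        rw [← up y (by omega)]
        exact hbl y y1 y2
      by_cases h : c = k+1
      · subst h
        rw [up'] at hbm
        have := hal (k+1) (by omega) le_rfl
        rw [up'] at this
        refine v6 a b ha hab hbc hbm this ?_ hbl'
        intro y y1 y2
        rw [← up y (by omega)]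
        exact hal y y1 (by omega)
      · rw [up c (by omega)] at hbm
        refine hnn a b c ha hab hbc (by omega) hbm ?_ hbl'
        intro y y1 y2
        rw [← up y (by omega)]
        exact hal y y1 y2

lemma exist {n : ℕ} (f : ℕ → ℕ) (hf : ∀ i, 1 ≤ i → i < n → i < ∑ r ∈ Finset.Icc 1 i, f r)
    (hfn : ∑ r ∈ Finset.Icc 1 n, f r = n)
    (hn : 1 < n) : ∃ m : ℕ → ℕ, Rt n m ∧ NN n m ∧ ∀ r, 1 ≤ r → r ≤ n → cnt m n r = f r := by
  obtain ⟨m, hm, hle, hroot, hnn⟩ := exist_aux f hf hn n le_rfl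
  have heq := (Finset.sum_eq_sum_iff_of_le (s := Finset.Icc 1 n) (fun r _ => hle r)).1
    (by rw [sum_cnt_self hm, hfn])
  have heq' : ∀ r, 1 ≤ r → r ≤ n → cnt m n r = f r :=
    fun r a b => heq r (Finset.mem_Icc.2 ⟨a, b⟩)
  refine ⟨m, hm, ?_, heq'⟩
  intro a b c d ha hab hbc hcd hdn had hbc' hal hbl
  have h1 := hnn a b c ha hab hbc (by omega) hbc' (fun y y1 y2 => hal y y1 (by omega)) hbl
  have h2 := cnt_lt m (k := c-1) (l := n) d (by omega) hdn
  have h3 := hm a ha (by omega)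
  rw [← had, heq' _ h3.1 (by omega)] at h2
  omega

noncomputable def mn {n : ℕ} (π : SetPartitionOn n) (i : ℕ) : ℕ := sInf (π.part i : Set ℕ)

section
variable {n : ℕ} (π : SetPartitionOn n)

lemma mn_mem {i : ℕ} (h1 : 1 ≤ i) (h2 : i ≤ n) : mn π i ∈ π.part i := by
  have : (π.part i : Set ℕ).Nonempty := by
    rw [Finset.coe_nonempty, Finpartition.part_nonempty, Finset.mem_Icc]
    exact ⟨h1, h2⟩
  exact Finset.mem_coe.1 (Nat.sInf_mem this)

lemma mn_le {i x : ℕ} (h : x ∈ π.part i) : mn π i ≤ x := Nat.sInf_le h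

lemma part_rng {i x : ℕ} (h : x ∈ π.part i) : 1 ≤ x ∧ x ≤ n :=
  Finset.mem_Icc.1 (π.part_subset i h)

lemma blk_rng {B : Finset ℕ} (hB : B ∈ π.parts) {x : ℕ} (h : x ∈ B) : 1 ≤ x ∧ x ≤ n :=
  Finset.mem_Icc.1 (π.le hB h)

lemma part_eq {i x : ℕ} (h1 : 1 ≤ i) (h2 : i ≤ n) (h : x ∈ π.part i) : π.part x = π.part i :=
  π.part_eq_of_mem (π.part_mem.2 (Finset.mem_Icc.2 ⟨h1, h2⟩)) h

lemma mn_rt : Rt n (mn π) := by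
  intro x h1 h2
  have h := mn_mem π h1 h2
  refine ⟨(part_rng π h).1, mn_le π (π.mem_part (Finset.mem_Icc.2 ⟨h1, h2⟩)), ?_⟩
  unfold mn at h ⊢
  rw [part_eq π h1 h2 h]

lemma mn_eq_iff {i j : ℕ} (h1 : 1 ≤ i) (h2 : i ≤ n) (h3 : 1 ≤ j) (h4 : j ≤ n) :
    mn π i = mn π j ↔ i ∈ π.part j := by
  constructor
  · intro h
    have a := mn_mem π h1 h2
    have b := mn_mem π h3 h4
    rw [← h] at b
    rw [← part_eq π h3 h4 b, part_eq π h1 h2 a]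
    exact π.mem_part (Finset.mem_Icc.2 ⟨h1, h2⟩)
  · intro h
    unfold mn
    rw [part_eq π h3 h4 h]

lemma mn_blk {B : Finset ℕ} (hB : B ∈ π.parts) {i : ℕ} (hi : i ∈ B) {x : ℕ} :
    x ∈ B ↔ (1 ≤ x ∧ x ≤ n) ∧ mn π x = mn π i := by
  have e := π.part_eq_of_mem hB hi
  have hr := blk_rng π hB hi
  constructor
  · intro h
    have hx := blk_rng π hB h
    refine ⟨hx, (mn_eq_iff π hx.1 hx.2 hr.1 hr.2).2 (by rwa [e])⟩
  · rintro ⟨hx, h⟩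
    rw [← e]
    exact (mn_eq_iff π hx.1 hx.2 hr.1 hr.2).1 h

lemma part_card {i : ℕ} (h1 : 1 ≤ i) (h2 : i ≤ n) (h : mn π i = i) :
    (π.part i).card = cnt (mn π) n i := by
  unfold cnt
  congr 1
  ext x
  have hi := Finset.mem_Icc.2 ⟨h1, h2⟩
  rw [mn_blk π (π.part_mem.2 hi) (π.mem_part hi), h]
  simp

lemma psi_entry (i : ℕ) :
    (π.parts.filter (fun B => i ∈ B ∧ ∀ x ∈ B, i ≤ x)).sum Finset.card = cnt (mn π) n i := by
  by_cases h0 : cnt (mn π) n i = 0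
  · rw [h0, Finset.sum_eq_zero_iff]
    intro B hB
    rw [Finset.mem_filter] at hB
    exfalso
    obtain ⟨hB, hi, hmin⟩ := hB
    have hr := blk_rng π hB hi
    have e := π.part_eq_of_mem hB hi
    have a := hmin _ (e ▸ mn_mem π hr.1 hr.2)
    have b := (mn_rt π i hr.1 hr.2).2.1
    have := cnt_lt (mn π) (k := 0) (l := n) i (by omega) hr.2
    rw [le_antisymm b a, h0] at this
    omega
  · have hroot := cnt_pos (mn_rt π) h0
    have hr : 1 ≤ i ∧ i ≤ n := by
      obtain ⟨x, hx⟩ := Finset.card_pos.1 (Nat.pos_of_ne_zero h0)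
      simp only [Finset.mem_filter, Finset.mem_Icc] at hx
      have := mn_rt π x hx.1.1 hx.1.2
      omega
    have hi := Finset.mem_Icc.2 hr
    rw [← part_card π hr.1 hr.2 hroot, ← Finset.sum_singleton Finset.card (π.part i)]
    congr 1
    ext B
    rw [Finset.mem_filter, Finset.mem_singleton]
    constructor
    · rintro ⟨a, b, _⟩
      exact (π.part_eq_of_mem a b).symm
    · rintro rfl
      refine ⟨π.part_mem.2 hi, π.mem_part hi, fun x hx => ?_⟩
      have := mn_le π hx
      omega

lemma psi_eq : psi n π = (List.range (n-1)).map (fun k => cnt (mn π) n (k+1)) := by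
  unfold psi
  apply List.map_congr_left
  intro k _
  exact psi_entry π (k+1)

lemma parts_count (j : ℕ) (hj : 0 < j) :
    (π.parts.filter (fun B => B.card = j)).card
      = ((Finset.Icc 1 n).filter (fun r => cnt (mn π) n r = j)).card := by
  symm
  apply Finset.card_bij (fun r _ => π.part r)
  · intro r hr
    rw [Finset.mem_filter] at hr
    have h := Finset.mem_Icc.1 hr.1
    have := cnt_pos (mn_rt π) (i := r) (by omega)
    rw [Finset.mem_filter, part_card π h.1 h.2 this]
    exact ⟨π.part_mem.2 hr.1, hr.2⟩
  · intro r hr r' hr' e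
    rw [Finset.mem_filter] at hr hr'
    have h := cnt_pos (mn_rt π) (i := r) (by omega)
    have h' := cnt_pos (mn_rt π) (i := r') (by omega)
    rw [← h, ← h']
    unfold mn
    rw [e]
  · intro B hB
    rw [Finset.mem_filter] at hB
    obtain ⟨x, hx⟩ := Finset.card_pos.1 (show 0 < B.card by omega)
    have hr := blk_rng π hB.1 hx
    have e := π.part_eq_of_mem hB.1 hx
    have hm := mn_mem π hr.1 hr.2
    have hr' := part_rng π hm
    have e' := part_eq π hr.1 hr.2 hm
    refine ⟨mn π x, ?_, by rw [e', e]⟩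
    rw [Finset.mem_filter, ← part_card π hr'.1 hr'.2 (mn_rt π x hr.1 hr.2).2.2, e', e]
    exact ⟨Finset.mem_Icc.2 hr', hB.2⟩

lemma arc_iff (i j : ℕ) : IsArc π i j ↔ i < j ∧ 1 ≤ i ∧ j ≤ n ∧ mn π i = mn π j ∧
    ∀ k, i < k → k < j → mn π k ≠ mn π i := by
  constructor
  · rintro ⟨hij, B, hB, hi, hj, hk⟩
    have h1 := blk_rng π hB hi
    have h2 := blk_rng π hB hj
    refine ⟨hij, h1.1, h2.2, ((mn_blk π hB hj).1 hi).2, ?_⟩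
    intro k k1 k2 h
    exact hk k ((mn_blk π hB hi).2 ⟨by omega, h⟩) ⟨k1, k2⟩
  · rintro ⟨hij, h1, h2, e, hk⟩
    have hi := Finset.mem_Icc.2 (show 1 ≤ i ∧ i ≤ n by omega)
    have hB := π.part_mem.2 hi
    have hiB := π.mem_part hi
    refine ⟨hij, π.part i, hB, hiB, (mn_blk π hB hiB).2 ⟨by omega, e.symm⟩, ?_⟩
    rintro k hkB ⟨k1, k2⟩
    exact hk k k1 k2 ((mn_blk π hB hiB).1 hkB).2

lemma nn_iff : Nonnesting π ↔ NN n (mn π) := by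
  unfold Nonnesting NN
  simp only [arc_iff]
  constructor
  · intro h a b c d h1 h2 h3 h4 h5 h6 h7 h8 h9
    exact h ⟨a, b, c, d, h2, h3, h4, ⟨by omega, h1, h5, h6, h8⟩, ⟨h3, by omega, by omega, h7, h9⟩⟩
  · rintro h ⟨a, b, c, d, h2, h3, h4, ⟨_, h1, h5, h6, h8⟩, ⟨_, _, _, h7, h9⟩⟩
    exact h a b c d h1 h2 h3 h4 h5 h6 h7 h8 h9

lemma cut_iff (i : ℕ) : IsCut π i ↔ 1 ≤ i ∧ i ≤ n - 1 ∧
    ∀ x, 1 ≤ x → x ≤ n → mn π x ≤ i → x ≤ i := by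
  unfold IsCut
  refine and_congr_right fun _ => and_congr_right fun _ => ?_
  constructor
  · intro h x h1 h2 hx
    have hxI := Finset.mem_Icc.2 ⟨h1, h2⟩
    rcases h _ (π.part_mem.2 hxI) with h | h
    · exact h x (π.mem_part hxI)
    · have := h _ (mn_mem π h1 h2)
      omega
  · intro h B hB
    by_contra! hc
    obtain ⟨⟨x, hx, hx'⟩, y, hy, hy'⟩ := hc
    have h1 := blk_rng π hB hx
    have h2 := blk_rng π hB hy
    have e := ((mn_blk π hB hy).1 hx).2
    have := (mn_rt π y h2.1 h2.2).2.1
    have := h x h1.1 h1.2 (by omega)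
    omega

lemma conn_iff : Connected π ↔
    ∀ i, 1 ≤ i → i < n → i < ∑ r ∈ Finset.Icc 1 i, cnt (mn π) n r := by
  unfold Connected
  simp only [cut_iff]
  constructor
  · intro h i h1 h2
    rw [sum_cnt (mn_rt π)]
    have := h i
    push Not at this
    obtain ⟨x, x1, x2, x3, x4⟩ := this h1 (by omega)
    have hss : Finset.Icc 1 i ⊂ (Finset.Icc 1 n).filter (fun x => mn π x ≤ i) := by
      rw [Finset.ssubset_iff_of_subset]
      · refine ⟨x, ?_, ?_⟩
        · rw [Finset.mem_filter, Finset.mem_Icc]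
          exact ⟨⟨x1, x2⟩, x3⟩
        · rw [Finset.mem_Icc]; omega
      · intro y hy
        rw [Finset.mem_Icc] at hy
        have := mn_rt π y hy.1 (by omega)
        rw [Finset.mem_filter, Finset.mem_Icc]
        omega
    have := Finset.card_lt_card hss
    simpa using this
  · rintro h i ⟨h1, h2, h3⟩
    have := h i h1 (by omega)
    rw [sum_cnt (mn_rt π)] at this
    have hs : (Finset.Icc 1 n).filter (fun x => mn π x ≤ i) ⊆ Finset.Icc 1 i := by
      intro y hy
      rw [Finset.mem_filter, Finset.mem_Icc] at hy
      rw [Finset.mem_Icc]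
      exact ⟨hy.1.1, h3 y hy.1.1 hy.1.2 hy.2⟩
    have := Finset.card_le_card hs
    simp at this
    omega

lemma cnt_last (hn : 1 < n) (h : Connected π) : cnt (mn π) n n = 0 := by
  rw [conn_iff] at h
  have h1 := h (n-1) (by omega) (by omega)
  have h2 := sum_cnt_self (mn_rt π)
  obtain ⟨k, rfl⟩ : ∃ k, n = k + 1 := ⟨n - 1, by omega⟩
  rw [Finset.sum_Icc_succ_top (by omega)] at h2
  simp only [Nat.add_sub_cancel] at h1
  omega

end

lemma mn_ext {n : ℕ} {π π' : SetPartitionOn n}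
    (h : ∀ i, 1 ≤ i → i ≤ n → mn π i = mn π' i) : π = π' := by
  have key : ∀ π π' : SetPartitionOn n, (∀ i, 1 ≤ i → i ≤ n → mn π i = mn π' i) →
      π.parts ⊆ π'.parts := by
    intro π π' h B hB
    obtain ⟨x, hx⟩ := π.nonempty_of_mem_parts hB
    have hr := blk_rng π hB hx
    have hI := Finset.mem_Icc.2 hr
    have : B = π'.part x := by
      ext y
      rw [mn_blk π hB hx, mn_blk π' (π'.part_mem.2 hI) (π'.mem_part hI)]
      refine and_congr_right fun hy => ?_
      rw [h y hy.1 hy.2, h x hr.1 hr.2]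
    rw [this]
    exact π'.part_mem.2 hI
  apply Finpartition.ext
  exact Finset.Subset.antisymm (key _ _ h) (key _ _ fun i a b => (h i a b).symm)

lemma mn_surj {n : ℕ} {m : ℕ → ℕ} (hm : Rt n m) :
    ∃ π : SetPartitionOn n, ∀ i, 1 ≤ i → i ≤ n → mn π i = m i := by
  classical
  refine ⟨Finpartition.ofSetSetoid (Setoid.ker m) (Finset.Icc 1 n), ?_⟩
  intro i h1 h2
  have a := mn_mem (Finpartition.ofSetSetoid (Setoid.ker m) (Finset.Icc 1 n)) h1 h2
  have hi := hm i h1 h2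
  have b : m i ∈ (Finpartition.ofSetSetoid (Setoid.ker m) (Finset.Icc 1 n)).part i := by
    rw [Finpartition.mem_part_ofSetSetoid_iff_rel]
    refine ⟨Finset.mem_Icc.2 ⟨h1, h2⟩, Finset.mem_Icc.2 (by omega), ?_⟩
    exact hi.2.2.symm
  have c := mn_le _ b
  rw [Finpartition.mem_part_ofSetSetoid_iff_rel] at a
  have d : m i = m _ := a.2.2
  have e := Finset.mem_Icc.1 a.2.1
  have := (hm _ e.1 e.2).2.1
  omega

lemma wt_take (g : ℕ → ℕ) (N j : ℕ) (hj : j ≤ N) :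
    wt (((List.range N).map (fun k => g (k+1))).take j)
      = ((∑ r ∈ Finset.Icc 1 j, g r : ℕ) : ℤ) - j := by
  rw [← List.map_take, List.take_range, min_eq_left hj]
  clear hj
  have wa : ∀ u v : List ℕ, wt (u ++ v) = wt u + wt v := by
    intro u v
    simp [wt]
  induction j with
  | zero => simp [wt]
  | succ j ih =>
    rw [List.range_succ, List.map_append, wa, ih,
      Finset.sum_Icc_succ_top (by omega)]
    simp [wt]
    ring

lemma count_word (g : ℕ → ℕ) (N a : ℕ) :
    ((List.range N).map (fun k => g (k+1))).count a
      = ((Finset.Icc 1 N).filter (fun r => g r = a)).card := by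
  induction N with
  | zero => simp
  | succ N ih =>
    rw [List.range_succ, List.map_append, List.count_append, ih,
      ← Finset.insert_Icc_right_eq_Icc_add_one (by omega), Finset.filter_insert]
    split_ifs with h
    · rw [Finset.card_insert_of_notMem (by simp)]
      simp [h]
    · simp [h]

lemma bset_iff (g : ℕ → ℕ) (n : ℕ) (hn : 1 < n) :
    (List.range (n-1)).map (fun k => g (k+1)) ∈ Bset ↔
      ∑ r ∈ Finset.Icc 1 (n-1), g r = n ∧
        ∀ i, 1 ≤ i → i < n → i < ∑ r ∈ Finset.Icc 1 i, g r := by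
  unfold Bset
  rw [Set.mem_ofPred_eq]
  have h := wt_take g (n-1) (n-1) le_rfl
  rw [List.take_of_length_le (by simp)] at h
  rw [h]
  refine and_congr (by omega) ?_
  simp only [List.length_map, List.length_range]
  constructor
  · intro h i h1 h2
    have := h i h1 (by omega)
    rw [wt_take g _ _ (by omega)] at this
    omega
  · intro h j h1 h2
    have := h j h1 (by omega)
    rw [wt_take g _ _ (by omega)]
    omega

lemma type_iff {n : ℕ} (hn : 1 < n) (π : SetPartitionOn n) (r : Fin n → ℕ)
    (h : Connected π) : HasType π r ↔ ∀ i : Fin n, (psi n π).count (i.1 + 1) = r i := by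
  unfold HasType
  refine forall_congr' fun i => ?_
  rw [psi_eq, count_word, parts_count π _ (by omega)]
  have h0 := cnt_last π hn h
  have : (Finset.Icc 1 n).filter (fun r => cnt (mn π) n r = i.1 + 1)
      = (Finset.Icc 1 (n-1)).filter (fun r => cnt (mn π) n r = i.1 + 1) := by
    ext x
    simp only [Finset.mem_filter, Finset.mem_Icc]
    constructor
    · rintro ⟨a, b⟩
      have : x ≠ n := by rintro rfl; omega
      exact ⟨by omega, b⟩
    · rintro ⟨a, b⟩
      exact ⟨by omega, b⟩
  rw [this]

/-- `ψ` is a bijection from the connected nonnesting partitions of `[n]` of type `r` onto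
`ℬ(r)`, the words of length `n - 1` in `ℬ` with `n - |r| - 1` letters `0` and `r i`
letters `i` for `1 ≤ i ≤ n`. -/
theorem psi_bijOn_nonnesting (n : ℕ) (hn : 1 < n) (r : Fin n → ℕ)
    (hrv : ∑ i, (i.1 + 1) * r i = n) (hr : ∑ i, r i < n) :
    Set.BijOn (psi n)
      {π : SetPartitionOn n | Nonnesting π ∧ HasType π r ∧ Connected π}
      {w : List ℕ | w.length = n - 1 ∧ w ∈ Bset ∧
        w.count 0 = n - (∑ i, r i) - 1 ∧ ∀ i : Fin n, w.count (i.1 + 1) = r i} := by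
  refine ⟨?_, ?_, ?_⟩
  · rintro π ⟨h1, h2, h3⟩
    have h0 := cnt_last π hn h3
    have h4 := (type_iff hn π r h3).1 h2
    have h5 := (conn_iff π).1 h3
    refine ⟨by simp [psi], ?_, ?_, h4⟩
    · rw [psi_eq, bset_iff (cnt (mn π) n) n hn]
      refine ⟨?_, h5⟩
      have := sum_cnt_self (mn_rt π)
      have e : Finset.Icc 1 n = insert n (Finset.Icc 1 (n-1)) := by
        ext x; simp; omega
      rw [e, Finset.sum_insert (by simp; omega), h0, zero_add] at this
      exact this
    · have e := Finset.card_eq_sum_card_fiberwise (s := Finset.Icc 1 (n-1))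
        (f := cnt (mn π) n) (t := Finset.range (n+1)) (by
          intro x _
          have : cnt (mn π) n x ≤ n := by
            refine (Finset.card_filter_le _ _).trans ?_
            simp
          simp
          omega)
      rw [Finset.sum_range_succ', Finset.sum_range] at e
      simp only [← count_word] at e
      rw [← psi_eq] at e
      simp only [h4] at e
      simp at e
      omega
  · rintro π ⟨h1, _, h3⟩ π' ⟨h1', _, h3'⟩ e
    apply mn_ext
    apply uniq (mn_rt π) (mn_rt π') ((nn_iff π).1 h1) ((nn_iff π').1 h1')
    intro i hi1 hi2
    by_cases hi : i = n
    · subst hi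
      rw [cnt_last π hn h3, cnt_last π' hn h3']
    · rw [psi_eq, psi_eq] at e
      have := List.map_inj_left.1 e (i-1) (by simp; omega)
      rwa [Nat.sub_add_cancel hi1] at this
  · rintro w ⟨hlen, hB, _, hcount⟩
    obtain ⟨f, hf, hfn⟩ : ∃ f : ℕ → ℕ, w = (List.range (n-1)).map (fun k => f (k+1)) ∧ f n = 0 := by
      refine ⟨fun k => w.getD (k-1) 0, ?_, ?_⟩
      · apply List.ext_getElem
        · simp [hlen]
        · intro i a b
          simp [a]
      · simp [hlen]
    have hB' := hB
    rw [hf, bset_iff f n hn] at hB'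
    obtain ⟨hs, hp⟩ := hB'
    obtain ⟨m, hm, hN, hcnt⟩ := exist f hp (by
      have e : Finset.Icc 1 n = insert n (Finset.Icc 1 (n-1)) := by
        ext x; simp; omega
      rw [e, Finset.sum_insert (by simp; omega), hfn, hs, zero_add]) hn
    obtain ⟨π, hπ⟩ := mn_surj hm
    have hc : ∀ r, 1 ≤ r → r ≤ n → cnt (mn π) n r = f r := by
      intro r a b
      rw [cnt_congr hπ, hcnt r a b]
    have hpsi : psi n π = w := by
      rw [psi_eq, hf]
      apply List.map_congr_left
      intro k hk
      rw [List.mem_range] at hk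
      exact hc (k+1) (by omega) (by omega)
    have hconn : Connected π := by
      rw [conn_iff]
      intro i h1 h2
      have := hp i h1 h2
      rwa [Finset.sum_congr rfl (g := f)]
      intro x hx
      rw [Finset.mem_Icc] at hx
      exact hc x hx.1 (by omega)
    refine ⟨π, ⟨?_, ?_, hconn⟩, hpsi⟩
    · rw [nn_iff]
      intro a b c d h1 h2 h3 h4 h5 h6 h7 h8 h9
      rw [hπ a (by omega) (by omega)] at h6 h8
      rw [hπ d (by omega) (by omega)] at h6
      rw [hπ b (by omega) (by omega)] at h7 h9
      rw [hπ c (by omega) (by omega)] at h7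
      refine hN a b c d h1 h2 h3 h4 h5 h6 h7 ?_ ?_
      · intro k k1 k2
        rw [← hπ k (by omega) (by omega)]
        exact h8 k k1 k2
      · intro k k1 k2
        rw [← hπ k (by omega) (by omega)]
        exact h9 k k1 k2
    · rw [type_iff hn π r hconn, hpsi]
      exact hcount
end

section
/- Let n > 1 and let r = (r_1, …, r_n) ∈ ℕ^n satisfy r_1 + 2r_2 + ⋯ + n·r_n = n and |r| := r_1 + ⋯ + r_n < n. Then the number of Dyck paths of length 2n with no returns and with ascent type r equals the cardinality of ℬ(r), the set of words of length n − 1 lying in ℬ with exactly n − |r| − 1 occurrences of letter 0 and exactly r_i occurrences of letter i for 1 ≤ i ≤ n. -/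
/-- A Dyck path of length `2n`: a list of `2n` steps (`true` = U, `false` = D) with `n` U's
and `n` D's such that every prefix has at least as many U's as D's. -/
def IsDyckPath (n : ℕ) (l : List Bool) : Prop :=
  l.length = 2 * n ∧ l.count true = n ∧ l.count false = n ∧
    ∀ k, (l.take k).count false ≤ (l.take k).count true

/-- The path `l` has ascent type `r = (r_1, …, r_n)`: for each `i`, the number of maximal
consecutive runs of U-steps of length `i` is `r_i`. -/
def HasAscentType (n : ℕ) (l : List Bool) (r : Fin n → ℕ) : Prop :=
  ∀ i : Fin n, ((l.splitOn false).map List.length).count (i.1 + 1) = r i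

def encW : List ℕ → List Bool
  | [] => []
  | a :: w => List.replicate a true ++ false :: encW w

def hgt (l : List Bool) : ℤ := (l.count true : ℤ) - l.count false

lemma hgt_append (a b : List Bool) : hgt (a ++ b) = hgt a + hgt b := by
  simp [hgt]; ring

lemma encW_append (u v : List ℕ) : encW (u ++ v) = encW u ++ encW v := by
  induction u with
  | nil => simp [encW]
  | cons a u ih => simp [encW, ih]

lemma encW_count_true (w : List ℕ) : (encW w).count true = w.sum := by
  induction w with
  | nil => simp [encW]
  | cons a u ih => simp [encW, ih]

lemma encW_count_false (w : List ℕ) : (encW w).count false = w.length := by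
  induction w with
  | nil => simp [encW]
  | cons a u ih => simp [encW, ih, List.count_replicate]

lemma encW_length (w : List ℕ) : (encW w).length = w.sum + w.length := by
  induction w with
  | nil => simp [encW]
  | cons a u ih => simp [encW, ih]; ring

lemma wt_eq (w : List ℕ) : wt w = (w.sum : ℤ) - w.length := by
  induction w with
  | nil => simp [wt]
  | cons a u ih =>
    have : wt (a :: u) = (a : ℤ) - 1 + wt u := by simp [wt]
    rw [this, ih]; push_cast [List.sum_cons, List.length_cons]; ring

lemma exists_encW (l : List Bool) : ∃ w a, l = encW w ++ List.replicate a true := by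
  induction l with
  | nil => exact ⟨[], 0, rfl⟩
  | cons b l ih =>
    obtain ⟨w, a, rfl⟩ := ih
    cases b with
    | false => exact ⟨0 :: w, a, by simp [encW]⟩
    | true =>
      cases w with
      | nil => exact ⟨[], a + 1, by simp [encW, List.replicate_succ]⟩
      | cons c w => exact ⟨(c + 1) :: w, a, by simp [encW, List.replicate_succ]⟩

lemma split_block (a : ℕ) (l : List Bool) :
    (List.replicate a true ++ false :: l).splitOn false
      = List.replicate a true :: l.splitOn false := by
  induction a with
  | zero => simp [List.splitOn, List.splitOnP_cons_eq_if_splitOnPPrepend]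
  | succ a ih =>
    simp only [List.splitOn] at ih ⊢
    simp [List.replicate_succ, List.splitOnP_cons_eq_if_splitOnPPrepend,
      List.splitOnPPrepend_eq_modifyHead] at ih ⊢
    simp [ih]

lemma split_encW (w : List ℕ) : ((encW w ++ [false]).splitOn false).map List.length = w ++ [0, 0] := by
  induction w with
  | nil =>
    have := split_block 0 []
    simp at this
    simp [encW, this]
  | cons a w ih =>
    have : encW (a :: w) ++ [false] = List.replicate a true ++ false :: (encW w ++ [false]) := by
      simp [encW]
    rw [this, split_block]; simp [ih]

lemma prefix_pos (w : List ℕ) : ∀ (c : ℤ), 0 ≤ c →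
    (∀ j, 0 < j → j ≤ w.length → 0 < c + wt (w.take j)) →
    ∀ k, 0 < k → k ≤ (encW w).length → 0 < c + hgt ((encW w).take k) := by
  induction w with
  | nil => intro c _ _ k hk hk'; simp [encW] at hk'; omega
  | cons a w ih =>
    intro c hc h k hk hk'
    by_cases hka : k ≤ a
    · have : (encW (a :: w)).take k = List.replicate k true := by
        simp [encW, List.take_append, List.take_replicate, hka, Nat.sub_eq_zero_of_le hka]
      rw [this]; simp [hgt, List.count_replicate]; omega
    · obtain ⟨m, rfl⟩ : ∃ m, k = a + (m + 1) := ⟨k - a - 1, by omega⟩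
      have e : (encW (a :: w)).take (a + (m + 1)) =
          (List.replicate a true ++ [false]) ++ (encW w).take m := by
        simp [encW, List.take_append, List.take_replicate]
      have e2 : hgt (List.replicate a true ++ [false]) = (a : ℤ) - 1 := by
        simp [hgt, List.count_replicate]
      have h1 : 0 < c + ((a : ℤ) - 1) := by simpa [wt] using h 1 (by omega) (by simp)
      rw [e, hgt_append, e2, ← add_assoc]
      rcases Nat.eq_zero_or_pos m with rfl | hm
      · simpa [hgt] using h1
      · refine ih _ h1.le ?_ m hm ?_
        · intro j hj hj'
          have := h (j + 1) (by omega) (by simpa using hj')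
          simpa [wt, add_assoc] using this
        · simp [encW] at hk'; omega

lemma len_eq (n : ℕ) (w : List ℕ) (h : ∀ x ∈ w, x ≤ n) :
    w.length = w.count 0 + ∑ i : Fin n, w.count (i.1 + 1) := by
  have := Multiset.sum_count_eq_card (s := Finset.range (n + 1)) (m := (w : Multiset ℕ))
    (by intro a ha; have := h a (by simpa using ha); simp; omega)
  simp only [Multiset.coe_count, Multiset.coe_card] at this
  rw [← this, Finset.sum_range_succ', Fin.sum_univ_eq_sum_range (fun i => w.count (i + 1)), add_comm]

/-- The number of Dyck paths of length `2n` with no returns and ascent type `r` equals the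
cardinality of `ℬ(r)`, the set of words of length `n - 1` in `ℬ` with `n - |r| - 1`
letters `0` and `r i` letters `i` for `1 ≤ i ≤ n`. -/
theorem card_dyck_no_returns_eq_card_Bset_r (n : ℕ) (hn : 1 < n) (r : Fin n → ℕ)
    (hrv : ∑ i, (i.1 + 1) * r i = n) (hr : ∑ i, r i < n) :
    Nat.card {l : List Bool // IsDyckPath n l ∧ HasAscentType n l r ∧
        ∀ k, 0 < k → k < 2 * n → (l.take k).count true ≠ (l.take k).count false} =
      Nat.card {w : List ℕ // w.length = n - 1 ∧ w ∈ Bset ∧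
        w.count 0 = n - (∑ i, r i) - 1 ∧ ∀ i : Fin n, w.count (i.1 + 1) = r i} := by
  symm
  have hget : ∀ l : List Bool, hgt l = (l.count true : ℤ) - l.count false := fun _ => rfl
  apply Nat.card_congr
  refine Equiv.ofBijective (fun w => ⟨encW w.1 ++ [false], ?_⟩) ⟨?_, ?_⟩
  · obtain ⟨w, hl, ⟨hw1, hw2⟩, h0, hc⟩ := w
    have hs : w.sum = n := by rw [wt_eq, hl] at hw1; omega
    have key : ∀ k, 0 < k → k < 2 * n → 0 < hgt ((encW w ++ [false]).take k) := by
      intro k hk hk'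
      have hk2 : k ≤ (encW w).length := by rw [encW_length]; omega
      have := prefix_pos w 0 le_rfl (by simpa using hw2) k hk hk2
      rwa [List.take_append_of_le_length hk2, ← zero_add (hgt _)]
    have hlen : (encW w ++ [false]).length = 2 * n := by
      simp [encW_length]; omega
    have ht : (encW w ++ [false]).count true = n := by simp [encW_count_true, hs]
    have hf : (encW w ++ [false]).count false = n := by simp [encW_count_false]; omega
    refine ⟨⟨hlen, ht, hf, ?_⟩, ?_, ?_⟩
    · intro k
      show ((encW w ++ [false]).take k).count false ≤ ((encW w ++ [false]).take k).count true
      rcases Nat.eq_zero_or_pos k with rfl | hk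
      · simp
      by_cases hk' : k < 2 * n
      · have := key k hk hk'; rw [hget] at this; omega
      · rw [List.take_of_length_le (by omega)]; omega
    · intro i
      rw [split_encW]
      simp [List.count_cons, hc i]
    · intro k hk hk'
      show ((encW w ++ [false]).take k).count true ≠ ((encW w ++ [false]).take k).count false
      have := key k hk hk'; rw [hget] at this; omega
  · rintro ⟨w, hw⟩ ⟨v, hv⟩ h
    have h' : encW w ++ [false] = encW v ++ [false] := congrArg Subtype.val h
    have := split_encW w
    rw [h', split_encW v] at this
    exact Subtype.ext (List.append_cancel_right this).symm
  · rintro ⟨l, ⟨hl, ht, hf, hp⟩, ha, hr'⟩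
    obtain ⟨w, a, rfl⟩ := exists_encW l
    have ht2 := ht
    have hf2 := hf
    rw [List.count_append, encW_count_true, List.count_replicate_self] at ht2
    rw [List.count_append, encW_count_false, List.count_replicate] at hf2
    simp only [Bool.true_beq, Bool.false_eq_true, if_false, add_zero] at hf2
    have h1 := hp (encW w).length
    rw [List.take_left' rfl, encW_count_true, encW_count_false] at h1
    obtain rfl : a = 0 := by omega
    have hpos : ∀ u v, w = u ++ v → u ≠ [] → u.length < n → u.length < u.sum := by
      rintro u v rfl hu hun
      have hup := List.length_pos_iff.2 hu
      have hle := hp (encW u).length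
      have e : (encW (u ++ v) ++ List.replicate 0 true).take (encW u).length = encW u := by
        simp [encW_append]
      have hne := hr' (encW u).length (by rw [encW_length]; omega) (by
        have h3 : (encW u).length ≤ (encW (u ++ v)).length := by simp [encW_append]
        rw [encW_length, encW_length] at h3
        simp only [List.length_append, List.sum_append] at h3 hf2 ht2
        rw [encW_length]; omega)
      rw [e, encW_count_true, encW_count_false] at hle hne
      omega
    have hwne : w ≠ [] := by rintro rfl; simp at hf2; omega
    obtain ⟨u, b, rfl⟩ : ∃ u b, w = u ++ [b] := ⟨_, _, (List.dropLast_append_getLast hwne).symm⟩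
    simp only [List.length_append, List.length_singleton, List.sum_append, List.sum_singleton] at hf2 ht2
    have hu := hpos u [b] rfl (by rintro rfl; simp at hf2; omega) (by omega)
    obtain rfl : b = 0 := by omega
    have e : encW (u ++ [0]) ++ List.replicate 0 true = encW u ++ [false] := by
      simp [encW_append, encW]
    have hc : ∀ i : Fin n, u.count (i.1 + 1) = r i := by
      intro i
      have := ha i
      rw [e, split_encW] at this
      simpa [List.count_cons] using this
    refine ⟨⟨u, by omega, ⟨?_, ?_⟩, ?_, hc⟩, Subtype.ext e.symm⟩
    · rw [wt_eq]; omega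
    · intro j hj hj'
      have := hpos (u.take j) (u.drop j ++ [0]) (by rw [← List.append_assoc, List.take_append_drop])
        (by rw [← List.length_pos_iff, List.length_take]; omega) (by rw [List.length_take]; omega)
      rw [wt_eq]; omega
    · have := len_eq n u (fun x hx => by have := List.le_sum_of_mem hx; omega)
      simp only [hc] at this
      omega
end
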